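/- arXiv:2010.00478 — 3 statements merged into one kernel-verified Lean document; each statement's English description precedes it below -/
import Mathlib

section
/- Let d and r be positive integers and let m = C(d + r, r) − 1, where C(·,·) denotes the binomial coefficient. Let μ₁, …, μ_m be finite measures on ℝ^d, each absolutely continuous with respect to the Lebesgue measure. Then there exists a nonzero real polynomial f in d variables of total degree at most r such that μ_i({x ∈ ℝ^d : f(x) ≥ 0}) = μ_i({x ∈ ℝ^d : f(x) ≤ 0}) for every i = 1, …, m. -/
open MeasureTheory

namespace ST
set_option linter.unusedSectionVars false

section chains
variable {V : Type*} [AddCommGroup V] [Module ℝ V]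

abbrev Ch (V : Type*) := List V →₀ ZMod 2

noncomputable def bs (l : List V) : Ch V := Finsupp.single l 1

noncomputable def ext {M : Type*} [AddCommGroup M] [Module (ZMod 2) M] (f : List V → M) :
    Ch V →ₗ[ZMod 2] M := Finsupp.linearCombination (ZMod 2) f

@[simp] lemma ext_bs {M : Type*} [AddCommGroup M] [Module (ZMod 2) M] (f : List V → M)
    (l : List V) : ext f (bs l) = f l := by
  simp [ext, bs]

lemma hom_ext {M : Type*} [AddCommGroup M] [Module (ZMod 2) M] {f g : Ch V →ₗ[ZMod 2] M}
    (h : ∀ l, f (bs l) = g (bs l)) : f = g := by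
  apply Finsupp.lhom_ext'
  intro l
  ext
  exact h l

lemma chadd (c : Ch V) : c + c = 0 := by
  have : (2 : ZMod 2) = 0 := by decide
  rw [← two_smul (ZMod 2), this, zero_smul]

noncomputable def cone (v : V) : Ch V →ₗ[ZMod 2] Ch V := ext fun l => bs (v :: l)

@[simp] lemma cone_bs (v : V) (l : List V) : cone v (bs l) = bs (v :: l) := by simp [cone]

noncomputable def bdL : List V → Ch V
  | [] => 0
  | v :: l => bs l + cone v (bdL l)

noncomputable def bd : Ch V →ₗ[ZMod 2] Ch V := ext bdL

@[simp] lemma bd_bs (l : List V) : bd (bs l) = bdL l := by simp [bd]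

lemma bd_cone (v : V) (c : Ch V) : bd (cone v c) = c + cone v (bd c) := by
  have : bd ∘ₗ cone v = LinearMap.id + cone v ∘ₗ bd := hom_ext fun l => by simp [bdL]
  exact congrArg (fun f => f c) this

lemma bd_bdL (l : List V) : bd (bdL l) = 0 := by
  induction l with
  | nil => simp [bdL]
  | cons v l ih => simp [bdL, bd_cone, ih, chadd]

lemma bd_bd (c : Ch V) : bd (bd c) = 0 := by
  have : (bd ∘ₗ bd : Ch V →ₗ[ZMod 2] Ch V) = 0 := hom_ext fun l => by simp [bd_bdL]
  exact congrArg (fun f => f c) this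

noncomputable def tau : Ch V →ₗ[ZMod 2] Ch V := ext fun l => bs (l.map fun v => -v)

@[simp] lemma tau_bs (l : List V) : tau (bs l) = bs (l.map fun v => -v) := by simp [tau]

lemma tau_cone (v : V) (c : Ch V) : tau (cone v c) = cone (-v) (tau c) := by
  have : tau ∘ₗ cone v = cone (-v) ∘ₗ tau := hom_ext fun l => by simp
  exact congrArg (fun f => f c) this

lemma bdL_neg (l : List V) : bdL (l.map fun v => -v) = tau (bdL l) := by
  induction l with
  | nil => simp [bdL]
  | cons v l ih => simp [bdL, tau_cone, ih]

/-- chains supported on lists with property `P` -/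
def Su (P : List V → Prop) : Submodule (ZMod 2) (Ch V) :=
  Finsupp.supported (ZMod 2) (ZMod 2) {l | P l}

lemma bs_mem {P : List V → Prop} {l : List V} (h : P l) : bs l ∈ Su P :=
  Finsupp.single_mem_supported _ _ h

lemma Su_mono {P Q : List V → Prop} (h : ∀ l, P l → Q l) : Su P ≤ Su Q :=
  Finsupp.supported_mono h

lemma Su_ind {P : List V → Prop} {p : Ch V → Prop} (h0 : p 0)
    (ha : ∀ a b, p a → p b → p (a + b)) (hb : ∀ l, P l → p (bs l)) {c : Ch V}
    (hc : c ∈ Su P) : p c := by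
  have hc' : ∀ l ∈ c.support, P l := fun l hl => hc hl
  clear hc
  induction c using Finsupp.induction with
  | zero => exact h0
  | single_add a b f haf hb0 ih =>
    have hb1 : b = 1 := by
      revert hb0; clear * -; revert b; decide
    subst hb1
    classical
    have hs := Finsupp.support_single_add haf hb0
    apply ha
    · apply hb; apply hc'; rw [hs]; simp
    · apply ih; intro l hl; apply hc'; rw [hs]; simp [hl]

lemma map_mem {P Q : List V → Prop} (f : Ch V →ₗ[ZMod 2] Ch V)
    (h : ∀ l, P l → f (bs l) ∈ Su Q) {c : Ch V} (hc : c ∈ Su P) : f c ∈ Su Q := by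
  refine Su_ind (p := fun c => f c ∈ Su Q) ?_ ?_ h hc
  · simp
  · intro a b ha hb; rw [map_add]; exact add_mem ha hb

lemma eq_on {M : Type*} [AddCommGroup M] [Module (ZMod 2) M]
    {P : List V → Prop} (f g : Ch V →ₗ[ZMod 2] M)
    (h : ∀ l, P l → f (bs l) = g (bs l)) {c : Ch V} (hc : c ∈ Su P) : f c = g c := by
  refine Su_ind (p := fun c => f c = g c) ?_ ?_ h hc
  · simp
  · intro a b ha hb; rw [map_add, map_add, ha, hb]

lemma bdL_mem (l : List V) : bdL l ∈ Su fun l' => l'.Sublist l ∧ l'.length < l.length := by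
  induction l with
  | nil => simp [bdL]
  | cons v l ih =>
    simp only [bdL]
    apply add_mem
    · apply bs_mem; simp
    · refine map_mem _ ?_ ih
      rintro l' ⟨h1, h2⟩
      rw [cone_bs]
      apply bs_mem
      simp [h1, h2]

/-! ### subdivision -/

noncomputable def bary (l : List V) : V := (1 / (l.length : ℝ)) • l.sum

lemma bary_neg (l : List V) : bary (l.map fun v => -v) = - bary l := by
  have : (l.map fun v => -v).sum = - l.sum := by
    induction l with
    | nil => simp
    | cons v l ih => simp [ih]; abel
  simp [bary, this]

noncomputable def T : ℕ → (Ch V →ₗ[ZMod 2] Ch V)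
  | 0 => LinearMap.id
  | n + 1 => ext fun l => match l with
    | [] => bs []
    | v :: l => cone (bary (v :: l)) (T n (bdL (v :: l)))

@[simp] lemma T_nil (n : ℕ) : T n (bs ([] : List V)) = bs [] := by
  cases n <;> simp [T]

lemma T_cons (n : ℕ) (v : V) (l : List V) :
    T (n + 1) (bs (v :: l)) = cone (bary (v :: l)) (T n (bdL (v :: l))) := by simp [T]

lemma T_stable (n : ℕ) (l : List V) (h : l.length ≤ n) : T (n + 1) (bs l) = T n (bs l) := by
  induction n generalizing l with
  | zero => have : l = [] := by simpa using h
            subst this; simp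
  | succ n ih =>
    cases l with
    | nil => simp
    | cons v l =>
      rw [T_cons, T_cons]
      congr 1
      refine eq_on _ _ ?_ (bdL_mem (v :: l))
      rintro l' ⟨_, h2⟩
      exact ih l' (by omega)

lemma bd_T (n : ℕ) (l : List V) (h : l.length ≤ n) : bd (T n (bs l)) = T n (bdL l) := by
  induction n generalizing l with
  | zero => simp [T]
  | succ n ih =>
    cases l with
    | nil => simp [bdL]
    | cons v l =>
      rw [T_cons, bd_cone]
      have h1 : bd (T n (bdL (v :: l))) = T n (bd (bdL (v :: l))) := by
        have key : (bd ∘ₗ T n) (bdL (v :: l)) = (T n ∘ₗ bd) (bdL (v :: l)) := by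
          refine eq_on _ _ ?_ (bdL_mem (v :: l))
          rintro l' ⟨_, h2⟩
          rw [LinearMap.comp_apply, LinearMap.comp_apply, bd_bs]
          exact ih l' (by omega)
        rwa [LinearMap.comp_apply, LinearMap.comp_apply] at key
      rw [h1, bd_bdL, map_zero, map_zero, add_zero]
      refine eq_on _ _ ?_ (bdL_mem (v :: l))
      rintro l' ⟨_, h2⟩
      exact (T_stable n l' (by omega)).symm

lemma T_tau (n : ℕ) (c : Ch V) : T n (tau c) = tau (T n c) := by
  induction n generalizing c with
  | zero => simp [T]
  | succ n ih =>
    have : T (n+1) ∘ₗ tau = tau ∘ₗ T (n+1) (V := V) := hom_ext fun l => by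
      cases l with
      | nil => simp
      | cons v l =>
        have h1 := bdL_neg (v :: l)
        have h2 := bary_neg (v :: l)
        simp only [LinearMap.comp_apply, tau_bs, List.map_cons, T_cons, tau_cone] at h1 h2 ⊢
        rw [h1, h2, ih]
    exact congrArg (fun f => f c) this

/-! ### cochains -/

variable (s : ℕ → V → ZMod 2)

def hd (a : V → ZMod 2) : List V → ZMod 2
  | [] => 0
  | v :: _ => a v

def F : ℕ → List V → ZMod 2
  | _, [] => 0
  | 0, _ :: l => if l = [] then 1 else 0
  | k + 1, v :: l => s k v * F k l + hd (s k) l * F k l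

def G (k : ℕ) (l : List V) : ZMod 2 := hd (s k) l * F s k l

lemma F_cons (k : ℕ) (v : V) (l : List V) :
    F s (k + 1) (v :: l) = s k v * F s k l + G s k l := rfl

lemma z2 (a : ZMod 2) : a + a = 0 := by revert a; decide

lemma F_cone (k : ℕ) (v : V) (c : Ch V) :
    ext (F s (k + 1)) (cone v c) = s k v * ext (F s k) c + ext (G s k) c := by
  have : ext (F s (k + 1)) ∘ₗ cone v = s k v • ext (F s k) + ext (G s k) :=
    hom_ext fun l => by simp [F_cons]
  exact congrArg (fun f => f c) this

lemma G_cone (k : ℕ) (v : V) (c : Ch V) :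
    ext (G s k) (cone v c) = s k v * ext (F s k) (cone v c) := by
  have : ext (G s k) ∘ₗ cone v = s k v • (ext (F s k) ∘ₗ cone v) :=
    hom_ext fun l => by simp [G, hd]
  exact congrArg (fun f => f c) this

def E (l : List V) : ZMod 2 := if l = [] then 1 else 0

lemma E_cone (v : V) (c : Ch V) : ext E (cone v c) = 0 := by
  have : ext E ∘ₗ cone v = 0 := hom_ext fun l => by simp [E]
  exact congrArg (fun f => f c) this

lemma F0_cone (v : V) (c : Ch V) : ext (F s 0) (cone v c) = ext E c := by
  have : ext (F s 0) ∘ₗ cone v = ext E := hom_ext fun l => by simp [E, F]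
  exact congrArg (fun f => f c) this

lemma E_bdL (l : List V) : ext E (bdL l) = F s 0 l := by
  cases l with
  | nil => simp [bdL, F]
  | cons v l => simp [bdL, E_cone, F, E]

lemma GB (k : ℕ) (h : ∀ l, ext (F s k) (bdL l) = 0) (l : List V) :
    ext (G s k) (bdL l) = F s (k + 1) l := by
  cases l with
  | nil => simp [bdL, F]
  | cons v l =>
    have h1 := h (v :: l)
    simp only [bdL, map_add, ext_bs] at h1 ⊢
    rw [G_cone, F_cons]
    have h2 : ext (F s k) (cone v (bdL l)) = F s k l := by
      have := z2 (F s k l)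
      linear_combination h1 - this
    rw [h2, add_comm]

lemma FB (k : ℕ) (l : List V) : ext (F s k) (bdL l) = 0 := by
  induction k generalizing l with
  | zero =>
    cases l with
    | nil => simp [bdL]
    | cons v l => simp only [bdL, map_add, ext_bs, F0_cone, E_bdL s, z2]
  | succ k ih =>
    cases l with
    | nil => simp [bdL]
    | cons v l =>
      simp only [bdL, map_add, ext_bs, F_cone, ih, GB s k ih, mul_zero, zero_add, z2]

lemma G_bd (k : ℕ) (c : Ch V) : ext (G s k) (bd c) = ext (F s (k + 1)) c := by
  have : ext (G s k) ∘ₗ bd = ext (F s (k + 1)) :=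
    hom_ext fun l => by simp [GB s k (FB s k)]
  exact congrArg (fun f => f c) this

lemma E_bd (c : Ch V) : ext E (bd c) = ext (F s 0) c := by
  have : ext E ∘ₗ bd = ext (F s 0) := hom_ext fun l => by simp [E_bdL s]
  exact congrArg (fun f => f c) this

lemma F_neg (N : V → Prop) (hs : ∀ k v, N v → s k (-v) = s k v + 1) (k : ℕ) (l : List V)
    (hl : ∀ v ∈ l, N v) :
    F s k (l.map fun v => -v) = F s k l ∧ G s k (l.map fun v => -v) = G s k l + F s k l := by
  have key : ∀ k (l : List V), (∀ v ∈ l, N v) → F s k (l.map fun v => -v) = F s k l →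
      G s k (l.map fun v => -v) = G s k l + F s k l := by
    intro k l hl h
    cases l with
    | nil => simp [G, F, hd]
    | cons v l =>
      simp only [G, hd, List.map_cons] at h ⊢
      rw [h, hs k v (hl v (by simp))]
      ring
  induction k generalizing l with
  | zero =>
    have : F s 0 (l.map fun v => -v) = F s 0 l := by cases l <;> simp [F]
    exact ⟨this, key _ _ hl this⟩
  | succ k ih =>
    have : F s (k+1) (l.map fun v => -v) = F s (k+1) l := by
      cases l with
      | nil => simp [F]
      | cons v l =>
        obtain ⟨h1, h2⟩ := ih l (fun w hw => hl w (by simp [hw]))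
        rw [List.map_cons, F_cons, F_cons, h1, h2, hs k v (hl v (by simp))]
        linear_combination z2 (F s k l)
    exact ⟨this, key _ _ hl this⟩

lemma G_tau (N : V → Prop) (hs : ∀ k v, N v → s k (-v) = s k v + 1) (k : ℕ) {c : Ch V}
    (hc : c ∈ Su fun l => ∀ v ∈ l, N v) :
    ext (G s k) (c + tau c) = ext (F s k) c := by
  have : (ext (G s k) ∘ₗ (LinearMap.id + tau)) c = ext (F s k) c := by
    refine eq_on _ _ ?_ hc
    intro l hl
    have := (F_neg s N hs k l hl).2
    simp only [LinearMap.comp_apply, LinearMap.add_apply, LinearMap.id_apply, map_add, tau_bs,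
      ext_bs, this]
    linear_combination z2 (G s k l)
  simpa using this

lemma F_ne (k : ℕ) (l : List V) (h : F s k l ≠ 0) :
    l ≠ [] ∧ ∀ i < k, ∃ u ∈ l, ∃ w ∈ l, s i u ≠ s i w := by
  induction k generalizing l with
  | zero => cases l <;> simp_all [F]
  | succ k ih =>
    match l with
    | [] => simp [F] at h
    | [v] => simp [F] at h
    | v :: u :: l =>
      have h1 : F s (k+1) (v :: u :: l) = (s k v + s k u) * F s k (u :: l) := by
        rw [F_cons]; simp only [G, hd]; ring
      rw [h1] at h
      have h2 := left_ne_zero_of_mul h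
      obtain ⟨-, h3⟩ := ih _ (right_ne_zero_of_mul h)
      refine ⟨by simp, fun i hi => ?_⟩
      rcases Nat.lt_succ_iff_lt_or_eq.1 hi with hi | rfl
      · obtain ⟨a, ha, b, hb, hab⟩ := h3 i hi
        exact ⟨a, List.mem_cons_of_mem _ ha, b, List.mem_cons_of_mem _ hb, hab⟩
      · refine ⟨v, by simp, u, by simp, fun he => h2 ?_⟩
        rw [he, z2]

/-- The abstract Borsuk-Ulam parity argument. -/
lemma parity (N : V → Prop) (hs : ∀ k v, N v → s k (-v) = s k v + 1) (m : ℕ) (h : ℕ → Ch V)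
    (hN : ∀ k ≤ m, h k ∈ Su fun l => ∀ v ∈ l, N v)
    (h0 : bd (h 0) = bs []) (hk : ∀ k < m, bd (h (k + 1)) = h k + tau (h k)) :
    ∀ k ≤ m, ext (F s k) (h k) = 1 := by
  intro k
  induction k with
  | zero => intro _; rw [← E_bd, h0]; simp [E]
  | succ k ih =>
    intro hkm
    rw [← G_bd, hk k (by omega), G_tau s N hs k (hN k (by omega)), ih (by omega)]

/-! ### octahedral chains -/

noncomputable def Oc (e : ℕ → V) : ℕ → Ch V
  | 0 => bs []
  | k + 1 => cone (e k) (Oc e k) + cone (- e k) (Oc e k)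

lemma bd_Oc (e : ℕ → V) (k : ℕ) : bd (Oc e k) = 0 := by
  induction k with
  | zero => simp [Oc, bdL]
  | succ k ih => simp [Oc, bd_cone, ih, chadd]

lemma tau_Oc (e : ℕ → V) (k : ℕ) : tau (Oc e k) = Oc e k := by
  induction k with
  | zero => simp [Oc]
  | succ k ih => simp [Oc, tau_cone, ih, add_comm]

noncomputable def hemi (e : ℕ → V) (k : ℕ) : Ch V := cone (e k) (Oc e k)

lemma bd_hemi0 (e : ℕ → V) : bd (hemi e 0) = bs [] := by
  simp [hemi, Oc, bdL]

lemma bd_hemi (e : ℕ → V) (k : ℕ) : bd (hemi e (k + 1)) = hemi e k + tau (hemi e k) := by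
  rw [hemi, bd_cone, bd_Oc, map_zero, add_zero, hemi, tau_cone, tau_Oc]; rfl

lemma Oc_mem (e : ℕ → V) (k : ℕ) : Oc e k ∈ Su fun l => l.length = k ∧
    ∃ ε : ℕ → ℝ, (∀ j, ε j = 1 ∨ ε j = -1) ∧ ∀ v ∈ l, ∃ j < k, v = ε j • e j := by
  induction k with
  | zero => exact bs_mem ⟨rfl, fun _ => 1, by simp, by simp⟩
  | succ k ih =>
    have key : ∀ a : ℝ, (a = 1 ∨ a = -1) → cone (a • e k) (Oc e k) ∈
        Su fun l => l.length = k + 1 ∧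
        ∃ ε : ℕ → ℝ, (∀ j, ε j = 1 ∨ ε j = -1) ∧ ∀ v ∈ l, ∃ j < k + 1, v = ε j • e j := by
      intro a ha
      refine map_mem _ ?_ ih
      rintro l ⟨hl, ε, hε, h⟩
      rw [cone_bs]
      refine bs_mem ⟨by simp [hl], Function.update ε k a, ?_, ?_⟩
      · intro j
        by_cases hj : j = k
        · subst hj; simpa using ha
        · simpa [hj] using hε j
      · intro v hv
        rcases List.mem_cons.1 hv with rfl | hv
        · exact ⟨k, by omega, by simp⟩
        · obtain ⟨j, hj, rfl⟩ := h v hv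
          exact ⟨j, by omega, by rw [Function.update_of_ne hj.ne]⟩
    have h1 := key 1 (by simp)
    have h2 := key (-1) (by simp)
    rw [one_smul] at h1
    rw [neg_smul, one_smul] at h2
    exact add_mem h1 h2

lemma hemi_mem (e : ℕ → V) (k : ℕ) : hemi e k ∈ Su fun l => l.length = k + 1 ∧
    ∃ ε : ℕ → ℝ, (∀ j, ε j = 1 ∨ ε j = -1) ∧ ∀ v ∈ l, ∃ j < k + 1, v = ε j • e j := by
  refine map_mem _ ?_ (Oc_mem e k)
  rintro l ⟨hl, ε, hε, h⟩
  rw [cone_bs]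
  refine bs_mem ⟨by simp [hl], Function.update ε k 1, ?_, ?_⟩
  · intro j
    by_cases hj : j = k
    · subst hj; simp
    · simpa [hj] using hε j
  · intro v hv
    rcases List.mem_cons.1 hv with rfl | hv
    · exact ⟨k, by omega, by simp⟩
    · obtain ⟨j, hj, rfl⟩ := h v hv
      exact ⟨j, by omega, by rw [Function.update_of_ne hj.ne]⟩

end chains

section geom
variable {V : Type*} [NormedAddCommGroup V] [NormedSpace ℝ V]

lemma bary_mem {K : Set V} (hK : Convex ℝ K) (l : List V) (hl : l ≠ []) (h : ∀ v ∈ l, v ∈ K) :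
    bary l ∈ K := by
  have h0 : (0 : ℝ) < l.length := by
    have := List.length_pos_of_ne_nil hl
    exact_mod_cast this
  have : bary l = ∑ i : Fin l.length, (1 / (l.length : ℝ)) • l[i] := by
    rw [bary, ← Finset.smul_sum]
    congr 1
    exact (Fin.sum_univ_getElem l).symm
  rw [this]
  apply hK.sum_mem
  · intro i _; positivity
  · simp; field_simp
  · intro i _; exact h _ (List.getElem_mem _)

lemma sum_dist (l : List V) (v : V) (D : ℝ) (h : ∀ u ∈ l, ‖u - v‖ ≤ D) :
    ‖l.sum - (l.length : ℝ) • v‖ ≤ l.length * D := by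
  induction l with
  | nil => simp
  | cons u l ih =>
    have h1 := ih fun w hw => h w (by simp [hw])
    have h2 := h u (by simp)
    have : (u :: l).sum - ((u :: l).length : ℝ) • v = (u - v) + (l.sum - (l.length : ℝ) • v) := by
      simp only [List.sum_cons, List.length_cons]
      push_cast
      module
    rw [this]
    refine (norm_add_le _ _).trans ?_
    simp only [List.length_cons]
    push_cast
    linarith

lemma bary_dist (l : List V) (v : V) (hv : v ∈ l) (D : ℝ) (hD : 0 ≤ D) (M : ℕ)
    (hM : l.length ≤ M) (h : ∀ u ∈ l, ‖u - v‖ ≤ D) : ‖bary l - v‖ ≤ (1 - 1 / (M : ℝ)) * D := by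
  obtain ⟨a, b, rfl⟩ := List.append_of_mem hv
  have h1 := sum_dist (a ++ b) v D (fun u hu => h u (by
    simp only [List.mem_append, List.mem_cons] at hu ⊢; tauto))
  set n : ℕ := (a ++ b).length with hn
  have hlen : (a ++ v :: b).length = n + 1 := by simp [hn]; omega
  have hsum : (a ++ v :: b).sum = v + (a ++ b).sum := by simp; abel
  have hn1 : (0 : ℝ) < (n : ℝ) + 1 := by positivity
  have e : bary (a ++ v :: b) - v = (1 / ((n : ℝ) + 1)) • ((a ++ b).sum - (n : ℝ) • v) := by
    rw [bary, hlen, hsum]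
    push_cast
    have : v = (1 / ((n : ℝ) + 1)) • (((n : ℝ) + 1) • v) := by
      rw [smul_smul, one_div, inv_mul_cancel₀ hn1.ne', one_smul]
    nth_rewrite 2 [this]
    rw [← smul_sub]
    congr 1
    module
  rw [e, norm_smul, Real.norm_of_nonneg (by positivity)]
  have hM' : (n : ℝ) + 1 ≤ M := by rw [hlen] at hM; exact_mod_cast hM
  have h3 : 1 / (M : ℝ) ≤ 1 / ((n : ℝ) + 1) := one_div_le_one_div_of_le hn1 hM'
  calc 1 / ((n : ℝ) + 1) * ‖(a ++ b).sum - (n : ℝ) • v‖ ≤ 1 / ((n : ℝ) + 1) * (n * D) := by gcongr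
    _ = (1 - 1 / ((n : ℝ) + 1)) * D := by field_simp; ring
    _ ≤ _ := by gcongr

lemma T_supp (M n : ℕ) (hn : n ≤ M) (D : ℝ) (hD : 0 ≤ D) (l : List V) (hl : l.length ≤ n)
    (K : Set V) (hK : Convex ℝ K) (hlK : ∀ v ∈ l, v ∈ K)
    (hlD : ∀ u ∈ l, ∀ v ∈ l, ‖u - v‖ ≤ D) :
    T n (bs l) ∈ Su fun l' => l'.length ≤ l.length ∧ (∀ v ∈ l', v ∈ K) ∧
      ∀ u ∈ l', ∀ v ∈ l', ‖u - v‖ ≤ (1 - 1 / (M : ℝ)) * D := by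
  induction n generalizing l K with
  | zero =>
    have : l = [] := by simpa using hl
    subst this
    rw [T_nil]
    exact bs_mem (by simp)
  | succ n ih =>
    cases l with
    | nil => rw [T_nil]; exact bs_mem (by simp)
    | cons w l =>
      rw [T_cons]
      set b := bary (w :: l) with hb
      set q := (1 - 1 / (M : ℝ)) * D with hq
      have hq0 : 0 ≤ q := by
        apply mul_nonneg _ hD
        have : (1 : ℝ) ≤ M := by exact_mod_cast (by omega : 1 ≤ M)
        rw [sub_nonneg, div_le_one (by linarith)]; exact this
      have h1 : ∀ v ∈ w :: l, ‖b - v‖ ≤ q := fun v hv =>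
        bary_dist _ v hv D hD M (by omega) fun u hu => hlD u hu v hv
      have h2 : T n (bdL (w :: l)) ∈ Su fun l' => l'.length < (w :: l).length ∧
          (∀ v ∈ l', v ∈ K ∩ Metric.closedBall b q) ∧
          ∀ u ∈ l', ∀ v ∈ l', ‖u - v‖ ≤ q := by
        refine map_mem _ ?_ (bdL_mem (w :: l))
        rintro f ⟨hf, hf'⟩
        refine Su_mono ?_ (ih (by omega) f (by omega) (K ∩ Metric.closedBall b q)
          (hK.inter (convex_closedBall _ _)) ?_ ?_)
        · rintro l' ⟨a1, a2, a3⟩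
          exact ⟨by omega, a2, a3⟩
        · intro v hv
          refine ⟨hlK v (hf.subset hv), ?_⟩
          rw [mem_closedBall_iff_norm, norm_sub_rev]
          exact h1 v (hf.subset hv)
        · intro u hu v hv
          exact hlD u (hf.subset hu) v (hf.subset hv)
      refine map_mem _ ?_ h2
      rintro l' ⟨a1, a2, a3⟩
      rw [cone_bs]
      have a4 : ∀ v ∈ l', ‖v - b‖ ≤ q := fun v hv => by
        have := (a2 v hv).2
        rwa [mem_closedBall_iff_norm] at this
      refine bs_mem ⟨by simpa using a1, ?_, ?_⟩
      · intro v hv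
        rcases List.mem_cons.1 hv with rfl | hv
        · exact bary_mem hK _ (by simp) hlK
        · exact (a2 v hv).1
      · intro u hu v hv
        rcases List.mem_cons.1 hu with rfl | hu <;> rcases List.mem_cons.1 hv with rfl | hv
        · simpa using hq0
        · rw [norm_sub_rev]; exact a4 v hv
        · exact a4 u hu
        · exact a3 u hu v hv

def Good (𝒦 : Set (Set V)) (m : ℕ) (D : ℝ) (h : ℕ → Ch V) : Prop :=
  (∀ k ≤ m, h k ∈ Su fun l => l.length ≤ k + 1 ∧ ∃ K ∈ 𝒦, (∀ v ∈ l, v ∈ K) ∧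
      ∀ u ∈ l, ∀ v ∈ l, ‖u - v‖ ≤ D) ∧
    bd (h 0) = bs [] ∧ ∀ k < m, bd (h (k + 1)) = h k + tau (h k)

lemma Good.step {𝒦 : Set (Set V)} (h𝒦 : ∀ K ∈ 𝒦, Convex ℝ K) {m : ℕ} {D : ℝ} (hD : 0 ≤ D)
    {h : ℕ → Ch V} (hh : Good 𝒦 m D h) :
    Good 𝒦 m ((1 - 1 / ((m + 1 : ℕ) : ℝ)) * D) fun k => T (m + 1) (h k) := by
  obtain ⟨h1, h2, h3⟩ := hh
  have hb : ∀ k ≤ m, bd (T (m + 1) (h k)) = T (m + 1) (bd (h k)) := by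
    intro k hk
    have key : (bd ∘ₗ T (m + 1)) (h k) = (T (m + 1) ∘ₗ bd) (h k) := by
      refine eq_on _ _ ?_ (h1 k hk)
      rintro l' ⟨h2, _⟩
      rw [LinearMap.comp_apply, LinearMap.comp_apply, bd_bs]
      exact bd_T _ l' (by omega)
    rwa [LinearMap.comp_apply, LinearMap.comp_apply] at key
  refine ⟨fun k hk => ?_, ?_, fun k hk => ?_⟩
  · refine map_mem _ ?_ (h1 k hk)
    rintro l ⟨a1, K, hK, a2, a3⟩
    refine Su_mono ?_ (T_supp (m + 1) (m + 1) le_rfl D hD l (by omega) K (h𝒦 K hK) a2 a3)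
    rintro l' ⟨b1, b2, b3⟩
    exact ⟨by omega, K, hK, b2, b3⟩
  · rw [hb 0 (by omega), h2, T_nil]
  · rw [hb (k + 1) (by omega), h3 k hk, map_add, T_tau]

lemma Good.fine {𝒦 : Set (Set V)} (h𝒦 : ∀ K ∈ 𝒦, Convex ℝ K) {m : ℕ} {D : ℝ} (hD : 0 ≤ D)
    {h : ℕ → Ch V} (hh : Good 𝒦 m D h) {δ : ℝ} (hδ : 0 < δ) :
    ∃ h' D', D' < δ ∧ Good 𝒦 m D' h' := by
  set q : ℝ := 1 - 1 / ((m + 1 : ℕ) : ℝ) with hq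
  have hq0 : 0 ≤ q := by
    rw [hq, sub_nonneg, div_le_one (by positivity)]; push_cast; linarith [m.cast_nonneg (α := ℝ)]
  have hq1 : q < 1 := by
    have : 0 < 1 / ((m + 1 : ℕ) : ℝ) := by positivity
    linarith
  have key : ∀ n : ℕ, ∃ h', Good 𝒦 m (q ^ n * D) h' := by
    intro n
    induction n with
    | zero => exact ⟨h, by simpa using hh⟩
    | succ n ih =>
      obtain ⟨h', hh'⟩ := ih
      have := hh'.step h𝒦 (by positivity)
      rw [← hq, ← mul_assoc, ← pow_succ'] at this
      exact ⟨_, this⟩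
  have ht : Filter.Tendsto (fun n : ℕ => q ^ n * D) Filter.atTop (nhds (0 * D)) :=
    (tendsto_pow_atTop_nhds_zero_of_lt_one hq0 hq1).mul_const D
  rw [zero_mul] at ht
  obtain ⟨n, hn⟩ := (ht.eventually (gt_mem_nhds hδ)).exists
  obtain ⟨h', hh'⟩ := key n
  exact ⟨h', _, hn, hh'⟩

end geom

section BU

def face (m : ℕ) (ε : Fin (m + 1) → ℝ) : Set (Fin (m + 1) → ℝ) :=
  {x | (∀ i, 0 ≤ ε i * x i) ∧ ∑ i, ε i * x i = 1}

def faces (m : ℕ) : Set (Set (Fin (m + 1) → ℝ)) :=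
  {K | ∃ ε : Fin (m + 1) → ℝ, (∀ j, ε j = 1 ∨ ε j = -1) ∧ K = face m ε}

lemma face_convex (m : ℕ) (ε : Fin (m + 1) → ℝ) : Convex ℝ (face m ε) := by
  intro x hx y hy a b ha hb hab
  refine ⟨fun i => ?_, ?_⟩
  · have h1 := mul_nonneg ha (hx.1 i)
    have h2 := mul_nonneg hb (hy.1 i)
    simp only [Pi.add_apply, Pi.smul_apply, smul_eq_mul]
    linarith
  · have : ∑ i, ε i * (a • x + b • y) i = a * ∑ i, ε i * x i + b * ∑ i, ε i * y i := by
      rw [Finset.mul_sum, Finset.mul_sum, ← Finset.sum_add_distrib]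
      refine Finset.sum_congr rfl fun i _ => ?_
      simp only [Pi.add_apply, Pi.smul_apply, smul_eq_mul]
      ring
    rw [this, hx.2, hy.2]; linarith

def sph (m : ℕ) : Set (Fin (m + 1) → ℝ) := {x | ∑ i, |x i| = 1}

lemma face_sph (m : ℕ) (ε : Fin (m + 1) → ℝ) (hε : ∀ j, ε j = 1 ∨ ε j = -1) :
    face m ε ⊆ sph m := by
  rintro x ⟨h1, h2⟩
  rw [sph, Set.mem_ofPred_eq, ← h2]
  refine Finset.sum_congr rfl fun i _ => ?_
  have := h1 i
  rcases hε i with h | h <;> rw [h] at this ⊢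
  · rw [abs_of_nonneg (by linarith)]; ring
  · rw [abs_of_nonpos (by linarith)]; ring

lemma sph_ne (m : ℕ) {x : Fin (m + 1) → ℝ} (hx : x ∈ sph m) : x ≠ 0 := by
  rintro rfl
  simp [sph] at hx

lemma sph_norm (m : ℕ) {x : Fin (m + 1) → ℝ} (hx : x ∈ sph m) : ‖x‖ ≤ 1 := by
  rw [pi_norm_le_iff_of_nonneg zero_le_one]
  intro i
  have hx' : ∑ i, |x i| = 1 := hx
  rw [← hx', Real.norm_eq_abs]
  exact Finset.single_le_sum (f := fun i => |x i|) (fun i _ => abs_nonneg _) (Finset.mem_univ i)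

lemma sph_compact (m : ℕ) : IsCompact (sph m) := by
  apply Metric.isCompact_of_isClosed_isBounded
  · exact isClosed_eq (by fun_prop) continuous_const
  · exact (Metric.isBounded_closedBall (x := 0) (r := 1)).subset fun x hx => by
      simpa using sph_norm m hx

noncomputable def evec (m : ℕ) (k : ℕ) : Fin (m + 1) → ℝ := fun i => if (i : ℕ) = k then 1 else 0

lemma Good_init (m : ℕ) : Good (faces m) m 2 (hemi (evec m)) := by
  refine ⟨fun k hk => ?_, bd_hemi0 _, fun k _ => bd_hemi _ k⟩
  refine Su_mono ?_ (hemi_mem _ k)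
  rintro l ⟨h1, ε, hε, h2⟩
  have h3 : ∀ v ∈ l, v ∈ face m fun i => ε i := by
    intro v hv
    obtain ⟨j, hj, rfl⟩ := h2 v hv
    have hs : ε j * ε j = 1 := by rcases hε j with h | h <;> rw [h] <;> norm_num
    have e : ∀ i : Fin (m + 1), ε i * (ε j • evec m j) i = if i = ⟨j, by omega⟩ then 1 else 0 := by
      intro i
      simp only [Pi.smul_apply, smul_eq_mul, evec, Fin.ext_iff]
      split_ifs with h
      · rw [h, mul_one, hs]
      · simp
    refine ⟨fun i => ?_, ?_⟩
    · rw [e]; split_ifs <;> norm_num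
    · simp only [e]; simp
  have h4 := fun v hv => sph_norm m (face_sph m (fun i => ε i) (fun i => hε i) (h3 v hv))
  refine ⟨h1.le, _, ⟨fun i => ε i, fun i => hε i, rfl⟩, h3, fun u hu v hv => ?_⟩
  have := norm_sub_le u v
  linarith [h4 u hu, h4 v hv]

open Classical in
noncomputable def sgn {m : ℕ} (g : ℕ → (Fin (m + 1) → ℝ) → ℝ) (k : ℕ) (v : Fin (m + 1) → ℝ) :
    ZMod 2 := if 0 < g k v ∨ (g k v = 0 ∧ 0 < toLex v) then 1 else 0

lemma sgn_neg {m : ℕ} (g : ℕ → (Fin (m + 1) → ℝ) → ℝ) (hodd : ∀ k v, g k (-v) = - g k v)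
    (k : ℕ) (v : Fin (m + 1) → ℝ) (hv : v ≠ 0) : sgn g k (-v) = sgn g k v + 1 := by
  have h1 : toLex (-v) = - toLex v := rfl
  have h11 : (1 : ZMod 2) + 1 = 0 := by decide
  have hv' : toLex v ≠ 0 := hv
  unfold sgn
  rw [hodd, h1]
  rcases lt_trichotomy (g k v) 0 with h | h | h
  · rw [if_pos (by left; linarith), if_neg (by rintro (h' | ⟨h', -⟩) <;> linarith)]; simp
  · rcases lt_or_gt_of_ne hv' with h' | h'
    · rw [if_pos (Or.inr ⟨by rw [h, neg_zero], neg_pos.2 h'⟩), if_neg]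
      · simp
      · rintro (h2 | ⟨-, h2⟩)
        · linarith
        · exact lt_asymm h2 h'
    · rw [if_neg, if_pos (Or.inr ⟨h, h'⟩)]
      · exact h11.symm
      · rintro (h2 | ⟨-, h2⟩)
        · linarith
        · exact lt_asymm (neg_pos.1 h2) h'
  · rw [if_neg (by rintro (h' | ⟨h', -⟩) <;> linarith), if_pos (by left; linarith)]
    exact h11.symm

lemma sgn_ne {m : ℕ} (g : ℕ → (Fin (m + 1) → ℝ) → ℝ) (k : ℕ) (u w : Fin (m + 1) → ℝ)
    (h : sgn g k u ≠ sgn g k w) : (g k u ≤ 0 ∧ 0 ≤ g k w) ∨ (g k w ≤ 0 ∧ 0 ≤ g k u) := by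
  unfold sgn at h
  by_contra hc
  push Not at hc
  apply h
  rcases lt_trichotomy (g k u) 0 with h1 | h1 | h1
  · have := hc.1 h1.le
    rw [if_neg (by rintro (h' | ⟨h', -⟩) <;> linarith),
      if_neg (by rintro (h' | ⟨h', -⟩) <;> linarith)]
  · have := hc.1 h1.le
    have := hc.2 this.le
    linarith
  · have : 0 < g k w := by
      by_contra h2
      have := hc.2 (not_lt.1 h2)
      linarith
    rw [if_pos (Or.inl h1), if_pos (Or.inl this)]

/-- Borsuk–Ulam. -/
theorem borsuk_ulam (m : ℕ) (g : ℕ → (Fin (m + 1) → ℝ) → ℝ)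
    (hodd : ∀ k v, g k (-v) = - g k v) (hc : ∀ k, ContinuousOn (g k) (sph m)) :
    ∃ x, x ≠ 0 ∧ ∀ i < m, g i x = 0 := by
  by_contra hno
  push Not at hno
  have hne : (sph m).Nonempty := by
    refine ⟨fun i => if i = 0 then 1 else 0, ?_⟩
    simp [sph, apply_ite abs]
  let Γ : (Fin (m + 1) → ℝ) → (Fin m → ℝ) := fun x i => g i x
  have hΓ : ContinuousOn Γ (sph m) := continuousOn_pi.2 fun i => hc i
  obtain ⟨x0, hx0, hmin⟩ := (sph_compact m).exists_isMinOn hne hΓ.norm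
  have hη : 0 < ‖Γ x0‖ := by
    rw [norm_pos_iff]
    intro h
    obtain ⟨i, hi, h'⟩ := hno x0 (sph_ne m hx0)
    exact h' (congrFun h ⟨i, hi⟩)
  set η := ‖Γ x0‖ with hηd
  have hu := (sph_compact m).uniformContinuousOn_of_continuous hΓ
  rw [Metric.uniformContinuousOn_iff] at hu
  obtain ⟨δ, hδ, hu⟩ := hu (η / 2) (by positivity)
  obtain ⟨h, D, hD, hg⟩ := (Good_init m).fine
    (by rintro K ⟨ε, _, rfl⟩; exact face_convex m ε) (by norm_num) hδ
  obtain ⟨h1, h2, h3⟩ := hg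
  have hpar := parity (sgn g) (fun v => v ≠ 0) (sgn_neg g hodd) m h (fun k hk => by
    refine Su_mono ?_ (h1 k hk)
    rintro l ⟨-, K, ⟨ε, hε, rfl⟩, hl, -⟩ v hv
    exact sph_ne m (face_sph m ε hε (hl v hv))) h2 h3 m le_rfl
  have hzero : ext (F (sgn g) m) (h m) = (0 : Ch (Fin (m + 1) → ℝ) →ₗ[ZMod 2] ZMod 2) (h m) := by
    refine eq_on _ _ ?_ (h1 m le_rfl)
    rintro l ⟨-, K, ⟨ε, hε, rfl⟩, hl, hlD⟩
    rw [ext_bs, LinearMap.zero_apply]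
    by_contra hF
    obtain ⟨hnil, hF⟩ := F_ne _ _ _ hF
    obtain ⟨x, hx⟩ := List.exists_mem_of_ne_nil l hnil
    have hsp : ∀ v ∈ l, v ∈ sph m := fun v hv => face_sph m ε hε (hl v hv)
    have hclose : ∀ v ∈ l, ∀ i : Fin m, |g i x - g i v| < η / 2 := by
      intro v hv i
      have h4 := hu x (hsp x hx) v (hsp v hv) (by
        rw [dist_eq_norm]; exact (hlD x hx v hv).trans_lt hD)
      rw [dist_eq_norm] at h4
      exact (norm_le_pi_norm (Γ x - Γ v) i).trans_lt h4
    have h5 : ‖Γ x‖ ≤ η / 2 := by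
      rw [pi_norm_le_iff_of_nonneg (by positivity)]
      intro i
      obtain ⟨u, hu', w, hw, huw⟩ := hF i i.2
      have a1 := abs_lt.1 (hclose u hu' i)
      have a2 := abs_lt.1 (hclose w hw i)
      rw [Real.norm_eq_abs, abs_le]
      change -(η / 2) ≤ g i x ∧ g i x ≤ η / 2
      rcases sgn_ne g i u w huw with h6 | h6 <;> constructor <;> linarith [h6.1, h6.2]
    have h7 : η ≤ ‖Γ x‖ := hmin (hsp x hx)
    linarith
  rw [hpar] at hzero
  simp at hzero

end BU

section poly

lemma poly_ae (n : ℕ) (p : MvPolynomial (Fin n) ℝ) (hp : p ≠ 0) :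
    ∀ᵐ x : Fin n → ℝ, MvPolynomial.eval x p ≠ 0 := by
  induction n with
  | zero =>
    refine Filter.Eventually.of_forall fun x hx => hp ?_
    apply MvPolynomial.funext
    intro y
    rw [Subsingleton.elim y x, hx, map_zero]
  | succ n ih =>
    set q := MvPolynomial.finSuccEquiv ℝ n p with hq
    have hq0 : q ≠ 0 := by simpa [hq] using hp
    have h1 := ih q.leadingCoeff (by simpa using hq0)
    have hcont : Continuous fun z : (Fin n → ℝ) × ℝ =>
        MvPolynomial.eval (Fin.cons z.2 z.1 : Fin (n + 1) → ℝ) p := by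
      refine (MvPolynomial.continuous_eval p).comp ?_
      refine continuous_pi fun i => ?_
      refine Fin.cases ?_ (fun j => ?_) i
      · simpa using continuous_snd
      · simp only [Fin.cons_succ]; fun_prop
    have h2 : ∀ᵐ z : (Fin n → ℝ) × ℝ,
        MvPolynomial.eval (Fin.cons z.2 z.1 : Fin (n + 1) → ℝ) p ≠ 0 := by
      refine (Measure.ae_prod_iff_ae_ae ?_).2 ?_
      · exact (isOpen_ne_fun hcont continuous_const).measurableSet
      filter_upwards [h1] with s hs
      have hne : q.map (MvPolynomial.eval s) ≠ 0 := by
        intro h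
        apply hs
        have := congrArg (fun t => Polynomial.coeff t q.natDegree) h
        simpa using this
      have hfin : {y : ℝ | (q.map (MvPolynomial.eval s)).IsRoot y}.Finite :=
        Polynomial.finite_setOfPred_isRoot hne
      filter_upwards [hfin.countable.ae_notMem volume] with y hy h
      apply hy
      rw [MvPolynomial.eval_eq_eval_mv_eval'] at h
      exact h
    have hmp := (Measure.measurePreserving_swap (μ := (volume : Measure ℝ))
      (ν := (volume : Measure (Fin n → ℝ)))).comp
      (volume_preserving_piFinSuccAbove (fun _ : Fin (n + 1) => ℝ) 0)
    have h3 := hmp.quasiMeasurePreserving.ae h2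
    filter_upwards [h3] with x hx
    convert hx using 3
    ext i
    refine Fin.cases ?_ (fun j => ?_) i
    · simp
    · simp [Fin.tail]

lemma poly_ae' (n : ℕ) (p : MvPolynomial (Fin n) ℝ) (hp : p ≠ 0) :
    ∀ᵐ x : EuclideanSpace ℝ (Fin n), MvPolynomial.eval (x : Fin n → ℝ) p ≠ 0 :=
  (PiLp.volume_preserving_ofLp (Fin n)).quasiMeasurePreserving.ae (poly_ae n p hp)

lemma exps (d r m : ℕ) (hm : m + 1 = (d + r).choose r) :
    ∃ e : Fin (m + 1) → (Fin d →₀ ℕ), Function.Injective e ∧ ∀ j, ((e j).sum fun _ a => a) ≤ r := by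
  let A := (Finset.univ : Finset (Fin (d + 1))).finsuppAntidiag r
  have hA : A.card = m + 1 := by
    rw [Finset.card_finsuppAntidiag_nat_eq_choose, hm]
    simp only [Finset.card_univ, Fintype.card_fin]
    congr 1
    omega
  let E := (A.equivFinOfCardEq hA).symm
  have hs : ∀ j, (E j).1 0 + ∑ i : Fin d, (E j).1 i.succ = r := by
    intro j
    have := (E j).2
    rw [Finset.mem_finsuppAntidiag] at this
    rw [← this.1, Fin.sum_univ_succ]
  refine ⟨fun j => (E j).1.tail, ?_, ?_⟩
  · intro a b hab
    apply E.injective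
    apply Subtype.ext
    have h : ∀ i : Fin d, (E a).1 i.succ = (E b).1 i.succ := fun i => DFunLike.congr_fun hab i
    ext i
    refine Fin.cases ?_ h i
    have h1 := hs a
    have h2 := hs b
    simp only [h] at h1
    omega
  · intro j
    rw [Finsupp.sum_fintype _ _ (by simp)]
    simp only [Finsupp.tail_apply]
    have := hs j
    omega

noncomputable def pol {d m : ℕ} (e : Fin (m + 1) → (Fin d →₀ ℕ)) (x : Fin (m + 1) → ℝ) :
    MvPolynomial (Fin d) ℝ := ∑ j, MvPolynomial.monomial (e j) (x j)

lemma pol_ne {d m : ℕ} (e : Fin (m + 1) → (Fin d →₀ ℕ)) (he : Function.Injective e)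
    (x : Fin (m + 1) → ℝ) (hx : x ≠ 0) : pol e x ≠ 0 := by
  classical
  intro h
  apply hx
  ext j
  have := congrArg (MvPolynomial.coeff (e j)) h
  simpa [pol, MvPolynomial.coeff_sum, MvPolynomial.coeff_monomial, he.eq_iff] using this

lemma pol_neg {d m : ℕ} (e : Fin (m + 1) → (Fin d →₀ ℕ)) (x : Fin (m + 1) → ℝ) :
    pol e (-x) = - pol e x := by
  simp [pol]

lemma pol_deg {d m r : ℕ} (e : Fin (m + 1) → (Fin d →₀ ℕ))
    (he : ∀ j, ((e j).sum fun _ a => a) ≤ r) (x : Fin (m + 1) → ℝ) :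
    (pol e x).totalDegree ≤ r := by
  refine MvPolynomial.totalDegree_finsetSum_le fun j _ => ?_
  exact (MvPolynomial.totalDegree_monomial_le _ _).trans (he j)

lemma pol_cont {d m : ℕ} (e : Fin (m + 1) → (Fin d →₀ ℕ)) (y : Fin d → ℝ) :
    Continuous fun x => MvPolynomial.eval y (pol e x) := by
  simp only [pol, map_sum, MvPolynomial.eval_monomial]
  fun_prop

lemma eval_cont {d : ℕ} (p : MvPolynomial (Fin d) ℝ) :
    Continuous fun y : EuclideanSpace ℝ (Fin d) => MvPolynomial.eval (y : Fin d → ℝ) p :=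
  (MvPolynomial.continuous_eval p).comp (PiLp.continuous_ofLp 2 _)

noncomputable def sg (a : ℝ) : ℝ := (SignType.sign a : ℝ)

lemma sg_neg (a : ℝ) : sg (-a) = - sg a := by
  simp [sg, Left.sign_neg]

lemma sg_eq (a : ℝ) : sg a = (Set.Ioi (0:ℝ)).indicator 1 a - (Set.Iio (0:ℝ)).indicator 1 a := by
  rcases lt_trichotomy a 0 with h | h | h
  · simp [sg, h, h.le, sign_neg h]
  · simp [sg, h]
  · simp [sg, h, h.le, sign_pos h]

lemma sg_meas : Measurable sg := by
  have : sg = fun a => (Set.Ioi (0:ℝ)).indicator 1 a - (Set.Iio (0:ℝ)).indicator 1 a := funext sg_eq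
  rw [this]
  exact (measurable_one.indicator measurableSet_Ioi).sub (measurable_one.indicator measurableSet_Iio)

lemma sg_cont {a : ℝ} (ha : a ≠ 0) : ContinuousAt sg a := by
  have h1 := continuousAt_sign_of_ne_zero ha
  exact (continuous_of_discreteTopology (f := fun t : SignType => (t : ℝ))).continuousAt.comp h1

lemma sg_bd (a : ℝ) : ‖sg a‖ ≤ 1 := by
  rcases lt_trichotomy a 0 with h | h | h
  · simp [sg, sign_neg h]
  · simp [sg, h]
  · simp [sg, sign_pos h]

end poly
end ST

/-- The Stone–Tukey polynomial ham sandwich theorem. -/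
theorem stone_tukey (d r : ℕ) (hd : 0 < d) (hr : 0 < r)
    (μ : Fin ((d + r).choose r - 1) → Measure (EuclideanSpace ℝ (Fin d)))
    (hfin : ∀ i, IsFiniteMeasure (μ i))
    (hac : ∀ i, μ i ≪ volume) :
    ∃ f : MvPolynomial (Fin d) ℝ, f ≠ 0 ∧ f.totalDegree ≤ r ∧
      ∀ i, μ i {x | 0 ≤ MvPolynomial.eval (x : Fin d → ℝ) f}
          = μ i {x | MvPolynomial.eval (x : Fin d → ℝ) f ≤ 0} := by
  classical
  obtain ⟨m, hm⟩ : ∃ m, m = (d + r).choose r - 1 := ⟨_, rfl⟩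
  have hm1 : m + 1 = (d + r).choose r := by
    have := Nat.choose_pos (Nat.le_add_left r d)
    omega
  obtain ⟨e, he, hdeg⟩ := ST.exps d r m hm1
  have hae : ∀ i x, x ≠ 0 → ∀ᵐ y : EuclideanSpace ℝ (Fin d) ∂(μ i),
      MvPolynomial.eval (y : Fin d → ℝ) (ST.pol e x) ≠ 0 :=
    fun i x hx => (hac i).ae_le (ST.poly_ae' d _ (ST.pol_ne e he x hx))
  have hmeas : ∀ x, Measurable fun y : EuclideanSpace ℝ (Fin d) =>
      MvPolynomial.eval (y : Fin d → ℝ) (ST.pol e x) := fun x => (ST.eval_cont _).measurable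
  let g : ℕ → (Fin (m + 1) → ℝ) → ℝ := fun k x =>
    if h : k < (d + r).choose r - 1 then
      ∫ y : EuclideanSpace ℝ (Fin d), ST.sg (MvPolynomial.eval (y : Fin d → ℝ) (ST.pol e x)) ∂(μ ⟨k, h⟩) else 0
  obtain ⟨x, hx, hgx⟩ := ST.borsuk_ulam m g (by
    intro k v
    simp only [g]
    split_ifs with h
    · simp only [ST.pol_neg, map_neg, ST.sg_neg, integral_neg]
    · simp) (by
    intro k
    simp only [g]
    split_ifs with h
    · intro x hx
      apply ContinuousAt.continuousWithinAt
      have := hfin ⟨k, h⟩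
      refine continuousAt_of_dominated (bound := fun _ => 1) ?_ ?_ (integrable_const _) ?_
      · exact Filter.Eventually.of_forall fun z =>
          (ST.sg_meas.comp (hmeas z)).aestronglyMeasurable
      · exact Filter.Eventually.of_forall fun z => Filter.Eventually.of_forall fun y => ST.sg_bd _
      · filter_upwards [hae ⟨k, h⟩ x (ST.sph_ne m hx)] with y hy
        exact ContinuousAt.comp (g := ST.sg) (ST.sg_cont hy) (ST.pol_cont e _).continuousAt
    · exact continuousOn_const)
  refine ⟨ST.pol e x, ST.pol_ne e he x hx, ST.pol_deg e hdeg x, fun i => ?_⟩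
  have hi := hgx i (by rw [hm]; exact i.2)
  simp only [g, i.2, dif_pos, Fin.eta] at hi
  have := hfin i
  set p := fun y : EuclideanSpace ℝ (Fin d) =>
    MvPolynomial.eval (y : Fin d → ℝ) (ST.pol e x) with hp
  have hA : MeasurableSet (p ⁻¹' Set.Ioi 0) := hmeas x measurableSet_Ioi
  have hB : MeasurableSet (p ⁻¹' Set.Iio 0) := hmeas x measurableSet_Iio
  have h1 : ∫ y, ST.sg (p y) ∂(μ i) =
      (μ i).real (p ⁻¹' Set.Ioi 0) - (μ i).real (p ⁻¹' Set.Iio 0) := by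
    rw [← integral_indicator_one hA, ← integral_indicator_one hB, ← integral_sub]
    · refine integral_congr_ae (Filter.Eventually.of_forall fun y => ?_)
      exact ST.sg_eq (p y)
    · exact (integrable_const (1 : ℝ)).indicator hA
    · exact (integrable_const (1 : ℝ)).indicator hB
  have h2 : (μ i).real (p ⁻¹' Set.Ioi 0) = (μ i).real (p ⁻¹' Set.Iio 0) := by
    linarith [hi, h1]
  have h3 : μ i (p ⁻¹' Set.Ioi 0) = μ i (p ⁻¹' Set.Iio 0) :=
    (measureReal_eq_measureReal_iff).1 h2
  have h4 : μ i {y | 0 ≤ p y} = μ i (p ⁻¹' Set.Ioi 0) := by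
    apply measure_congr
    filter_upwards [hae i x hx] with y hy
    exact propext ⟨fun h => lt_of_le_of_ne h (Ne.symm hy), fun h => le_of_lt h⟩
  have h5 : μ i {y | p y ≤ 0} = μ i (p ⁻¹' Set.Iio 0) := by
    apply measure_congr
    filter_upwards [hae i x hx] with y hy
    exact propext ⟨fun h => lt_of_le_of_ne h hy, fun h => le_of_lt h⟩
  exact h4.trans (h3.trans h5.symm)
end

section
/- Let d be a positive integer and let μ₁, …, μ_{d+1} be finite measures on ℝ^d, each absolutely continuous with respect to the Lebesgue measure. Then there exist real numbers a, c and a vector b ∈ ℝ^d, not all zero, such that for the function f(x) = a·‖x‖² + ⟨b, x⟩ + c, one has μ_i({x : f(x) ≥ 0}) = μ_i({x : f(x) ≤ 0}) for every i = 1, …, d + 1. In particular, if a ≠ 0 the common boundary {x : f(x) = 0} is a sphere containing exactly half of each measure on each side. -/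
open MeasureTheory
open scoped RealInnerProductSpace

namespace BU

/-- even endpoint -/
def ev {M : ℕ} (c : Fin M × Bool) : ℤ := 2 * (c.1.val : ℤ) + (if c.2 then 2 else 0)
/-- odd endpoint -/
def od {M : ℕ} (c : Fin M × Bool) : ℤ := 2 * (c.1.val : ℤ) + 1

/-- vertices of a simplex -/
def path {M n : ℕ} (h : Fin n → Fin M × Bool) (τ : Equiv.Perm (Fin n)) (k : ℕ) : Fin n → ℤ :=
  fun i => if (τ i).val < k then od (h i) else ev (h i)

/-- sum of a cochain over all simplices -/
def Phi (M n : ℕ) (β : (ℕ → Fin n → ℤ) → ZMod 2) : ZMod 2 :=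
  ∑ τ : Equiv.Perm (Fin n), ∑ h : Fin n → Fin M × Bool, β (path h τ)

lemma Phi_add {M n : ℕ} (β γ : (ℕ → Fin n → ℤ) → ZMod 2) :
    Phi M n (fun q => β q + γ q) = Phi M n β + Phi M n γ := by
  simp [Phi, Finset.sum_add_distrib]

lemma z2 (a : ZMod 2) : a + a = 0 := CharTwo.add_self_eq_zero a

/-- cochain not depending on vertex 0 -/
lemma Phi_zero {M n : ℕ} (β : (ℕ → Fin (n+1) → ℤ) → ZMod 2)
    (hβ : ∀ q q' : ℕ → Fin (n+1) → ℤ, (∀ k, k ≠ 0 → q k = q' k) → β q = β q') :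
    Phi M (n+1) β = 0 := by
  unfold Phi
  refine Finset.sum_eq_zero fun τ _ => ?_
  let i := τ.symm 0
  refine Finset.sum_involution (fun h _ => Function.update h i ((h i).1, !(h i).2)) ?_ ?_ ?_ ?_
  · intro h _
    rw [← hβ (path h τ) (path (Function.update h i ((h i).1, !(h i).2)) τ), z2]
    intro k hk
    funext j
    by_cases hj : j = i
    · subst hj
      have : 0 < k := Nat.pos_of_ne_zero hk
      simp [path, i, od, this]
    · simp [path, hj]
  · intro h _ _ e
    have := congrFun e i
    simp [Prod.ext_iff] at this
  · intro h _; simp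
  · intro h _; simp

/-- cochain not depending on an intermediate vertex -/
lemma Phi_mid {M n : ℕ} (k : ℕ) (hk : k + 1 < n) (β : (ℕ → Fin n → ℤ) → ZMod 2)
    (hβ : ∀ q q' : ℕ → Fin n → ℤ, (∀ l, l ≠ k + 1 → q l = q' l) → β q = β q') :
    Phi M n β = 0 := by
  unfold Phi
  have hne : (⟨k, by omega⟩ : Fin n) ≠ ⟨k+1, hk⟩ := by simp
  refine Finset.sum_involution
    (fun τ _ => Equiv.swap (⟨k, by omega⟩ : Fin n) ⟨k+1, hk⟩ * τ) ?_ ?_ ?_ ?_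
  · intro τ _
    rw [← Finset.sum_add_distrib]
    refine Finset.sum_eq_zero fun h _ => ?_
    rw [← hβ (path h τ) (path h (Equiv.swap (⟨k, by omega⟩ : Fin n) ⟨k+1, hk⟩ * τ)), z2]
    intro l hl
    funext j
    simp only [path, Equiv.Perm.mul_apply]
    congr 1
    rw [Equiv.swap_apply_def]
    split_ifs with h1 h2
    · simp [h1]; omega
    · simp [h2]; omega
    · rfl
  · intro τ _ _ e
    rw [mul_eq_right] at e
    have := Equiv.swap_eq_one_iff.1 e
    exact hne this
  · intro h _; simp
  · intro h _; simp [← mul_assoc]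

lemma sum_ev (M : ℕ) (G : ℤ → ZMod 2) :
    ∑ c : Fin M × Bool, G (ev c) = G 0 + G (2 * M) := by
  rw [Fintype.sum_prod_type]
  simp only [Fintype.sum_bool, ev, if_true, Bool.false_eq_true, if_false, add_zero]
  rw [Fin.sum_univ_eq_sum_range (fun c : ℕ => G (2 * (c:ℤ) + 2) + G (2 * (c:ℤ)))]
  induction M with
  | zero => simp [z2]
  | succ M ih =>
    rw [Finset.sum_range_succ, ih]
    have : (2 * ((M + 1 : ℕ) : ℤ)) = 2 * M + 2 := by push_cast; ring
    rw [this]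
    have := z2 (G (2 * M))
    linear_combination this

/-- extend a permutation -/
def ext {n : ℕ} (x : Fin (n+1) × Equiv.Perm (Fin n)) : Equiv.Perm (Fin (n+1)) :=
  ((finSuccEquiv' x.1).trans (Equiv.optionCongr x.2)).trans (finSuccEquiv' (Fin.last n)).symm

lemma ext_self {n : ℕ} (i : Fin (n+1)) (τ : Equiv.Perm (Fin n)) : ext (i, τ) i = Fin.last n := by
  simp [ext]

lemma ext_succAbove {n : ℕ} (i : Fin (n+1)) (τ : Equiv.Perm (Fin n)) (j : Fin n) :
    ext (i, τ) (i.succAbove j) = (τ j).castSucc := by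
  simp [ext]

lemma ext_bij {n : ℕ} : Function.Bijective (ext (n := n)) := by
  rw [Fintype.bijective_iff_injective_and_card]
  constructor
  · rintro ⟨i, τ⟩ ⟨i', τ'⟩ h
    have hi : i = i' := by
      apply (ext (i', τ')).injective
      rw [ext_self, ← h, ext_self]
    subst hi
    congr 1
    ext j : 1
    have := congrArg (fun e => e (i.succAbove j)) h
    simpa [ext_succAbove] using this
  · simp [Fintype.card_perm, Nat.factorial_succ]

lemma Phi_last {M n : ℕ} (β : (ℕ → Fin (n+1) → ℤ) → ZMod 2)
    (hβ : ∀ q q' : ℕ → Fin (n+1) → ℤ, (∀ k, k ≤ n → q k = q' k) → β q = β q') :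
    Phi M (n+1) β = ∑ i : Fin (n+1),
      (Phi M n (fun q => β (fun k => i.insertNth (0:ℤ) (q k)))
        + Phi M n (fun q => β (fun k => i.insertNth (2 * M : ℤ) (q k)))) := by
  unfold Phi
  rw [← ext_bij.sum_comp, Fintype.sum_prod_type]
  refine Finset.sum_congr rfl fun i _ => ?_
  rw [← Finset.sum_add_distrib]
  refine Finset.sum_congr rfl fun τ _ => ?_
  rw [← (Fin.insertNthEquiv (fun _ => Fin M × Bool) i).sum_comp, Fintype.sum_prod_type,
    Finset.sum_comm, ← Finset.sum_add_distrib]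
  refine Finset.sum_congr rfl fun h _ => ?_
  rw [← sum_ev M (fun v => β (fun k => i.insertNth v (path h τ k)))]
  refine Finset.sum_congr rfl fun c _ => ?_
  apply hβ
  intro k hk
  funext j
  refine Fin.succAboveCases i ?_ (fun j => ?_) j
  · simp [path, ext_self, hk]
  · simp [path, ext_succAbove]

/-- reflection invariance -/
lemma Phi_reflect {M n : ℕ} (i : Fin n) (β : (ℕ → Fin n → ℤ) → ZMod 2) :
    Phi M n (fun q => β (fun k => Function.update (q k) i (2 * M - q k i))) = Phi M n β := by
  unfold Phi
  refine Finset.sum_congr rfl fun τ _ => ?_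
  let r : (Fin n → Fin M × Bool) → (Fin n → Fin M × Bool) :=
    fun h => Function.update h i ((h i).1.rev, !(h i).2)
  have hr : Function.Involutive r := by intro h; simp [r]
  rw [← hr.bijective.sum_comp]
  refine Finset.sum_congr rfl fun h _ => ?_
  show β (fun k => Function.update (path (r h) τ k) i (2 * M - path (r h) τ k i)) = β (path h τ)
  congr 1
  funext k j
  by_cases hj : j = i
  · subst hj
    have h1 := (h j).1.isLt
    have h2 : (((h j).1.rev : ℕ) : ℤ) = M - 1 - (h j).1 := by
      rw [Fin.val_rev]; omega
    simp only [path, r, Function.update_self, od, ev, h2]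
    cases (h j).2 <;> simp <;> split_ifs <;> ring
  · simp [path, r, hj]

/-- identification conditions -/
def Good (M n : ℕ) (s : (Fin n → ℤ) → ZMod 2) : Prop :=
  (∀ i j : Fin n, j.val = i.val + 1 → ∀ t : Fin n → ℤ, t i = 2 * M →
    s t = s (Function.update (Function.update t i 0) j (2 * M - t j))) ∧
  (∀ i : Fin n, i.val + 1 = n → ∀ t : Fin n → ℤ, t i = 2 * M → s t = 1 + s (Function.update t i 0))

lemma Good.down {M n : ℕ} {s : (Fin (n+1) → ℤ) → ZMod 2} (hs : Good M (n+1) s) :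
    Good M n (fun x => s (Fin.snoc (α := fun _ => ℤ) x 0)) := by
  constructor
  · intro i j hij t ht
    have e1 := hs.1 i.castSucc j.castSucc (by simpa using hij) (Fin.snoc (α := fun _ => ℤ) t 0) (by simpa using ht)
    simpa [Fin.snoc_update] using e1
  · intro i hi t ht
    have e1 := hs.1 i.castSucc (Fin.last n) (by simpa using hi.symm) (Fin.snoc (α := fun _ => ℤ) t 0) (by simpa using ht)
    have e2 := hs.2 (Fin.last n) (by simp) (Function.update (Function.update (Fin.snoc (α := fun _ => ℤ) t 0) i.castSucc 0) (Fin.last n) (2 * M)) (by simp)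
    simp only [Fin.snoc_last, sub_zero] at e1
    show s (Fin.snoc (α := fun _ => ℤ) t 0) = 1 + s (Fin.snoc (α := fun _ => ℤ) (Function.update t i 0) 0)
    rw [e1, e2, Function.update_idem, ← Fin.snoc_update, Fin.update_snoc_last]

lemma hybrid {V : Type*} (n : ℕ) (Ψ : ((ℕ → V) → ZMod 2) → ZMod 2)
    (hadd : ∀ β γ, Ψ (fun q => β q + γ q) = Ψ β + Ψ γ)
    (hfree : ∀ k < n, ∀ β, (∀ q q' : ℕ → V, (∀ l, l ≠ k → q l = q' l) → β q = β q') → Ψ β = 0)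
    (s : ℕ → V → ZMod 2) :
    Ψ (fun q => ∏ j ∈ Finset.range n, (s j (q j) + s j (q (j+1))))
     = if n = 0 then Ψ (fun _ => 1) else Ψ (fun q => s 0 (q 0) * ∏ j ∈ Finset.range (n-1), (s (j+1) (q j) + s (j+1) (q (j+1)))) := by
  rcases n with _ | n
  · simp
  simp only [Nat.add_eq_zero_iff, one_ne_zero, and_false, if_false, Nat.add_sub_cancel]
  have key : ∀ k ≤ n, Ψ (fun q => ∏ j ∈ Finset.range (n+1), (s j (q j) + s j (q (j+1)))) =
      Ψ (fun q => s 0 (q 0) * (∏ j ∈ Finset.range k, (s (j+1) (q j) + s (j+1) (q (j+1))))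
        * ∏ j ∈ Finset.Ico k n, (s (j+1) (q (j+1)) + s (j+1) (q (j+2)))) := by
    have conc : ∀ β γ : (ℕ → V) → ZMod 2, Ψ (fun q => β q + γ q) = 0 → Ψ β = Ψ γ := by
      intro β γ h
      rw [hadd] at h
      have := z2 (Ψ γ)
      linear_combination h - this
    intro k
    induction k with
    | zero =>
      intro _
      apply conc
      apply hfree 0 (by omega)
      intro q q' h
      have e : ∀ q : ℕ → V, ∏ j ∈ Finset.range (n+1), (s j (q j) + s j (q (j+1))) +
        s 0 (q 0) * (∏ j ∈ Finset.range 0, (s (j+1) (q j) + s (j+1) (q (j+1))))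
        * ∏ j ∈ Finset.Ico 0 n, (s (j+1) (q (j+1)) + s (j+1) (q (j+2)))
        = s 0 (q 1) * ∏ j ∈ Finset.range n, (s (j+1) (q (j+1)) + s (j+1) (q (j+2))) := by
        intro q
        rw [Finset.prod_range_succ']
        simp only [Finset.range_zero, Finset.prod_empty, Finset.range_eq_Ico, zero_add, add_assoc, Nat.reduceAdd, Finset.Ico_self]
        linear_combination (∏ j ∈ Finset.Ico 0 n, (s (j+1) (q (j+1)) + s (j+1) (q (j+2)))) * z2 (s 0 (q 0))
      rw [e, e, h 1 (by omega)]
      congr 1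
      refine Finset.prod_congr rfl fun j _ => ?_
      rw [h (j+1) (by omega), h (j+2) (by omega)]
    | succ k ih =>
      intro hk
      rw [ih (by omega)]
      apply conc
      apply hfree (k+1) (by omega)
      intro q q' h
      have e : ∀ q : ℕ → V, s 0 (q 0) * (∏ j ∈ Finset.range k, (s (j+1) (q j) + s (j+1) (q (j+1))))
        * ∏ j ∈ Finset.Ico k n, (s (j+1) (q (j+1)) + s (j+1) (q (j+2))) +
        s 0 (q 0) * (∏ j ∈ Finset.range (k+1), (s (j+1) (q j) + s (j+1) (q (j+1))))
        * ∏ j ∈ Finset.Ico (k+1) n, (s (j+1) (q (j+1)) + s (j+1) (q (j+2)))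
        = s 0 (q 0) * (∏ j ∈ Finset.range k, (s (j+1) (q j) + s (j+1) (q (j+1)))) *
          (s (k+1) (q k) + s (k+1) (q (k+2))) *
         ∏ j ∈ Finset.Ico (k+1) n, (s (j+1) (q (j+1)) + s (j+1) (q (j+2))) := by
        intro q
        rw [Finset.prod_eq_prod_Ico_succ_bot (by omega : k < n), Finset.prod_range_succ]
        linear_combination s 0 (q 0) * (∏ j ∈ Finset.range k, (s (j+1) (q j) + s (j+1) (q (j+1)))) * (∏ j ∈ Finset.Ico (k+1) n, (s (j+1) (q (j+1)) + s (j+1) (q (j+2)))) * z2 (s (k+1) (q (k+1)))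
      rw [e, e, h 0 (by omega), h k (by omega), h (k+2) (by omega)]
      congr 1
      · congr 2
        refine Finset.prod_congr rfl fun j hj => ?_
        have := Finset.mem_range.1 hj
        rw [h j (by omega), h (j+1) (by omega)]
      · refine Finset.prod_congr rfl fun j hj => ?_
        have := Finset.mem_Ico.1 hj
        rw [h (j+1) (by omega), h (j+2) (by omega)]
  rw [key n le_rfl]
  simp

theorem W_eq_one (M n : ℕ) (s : ℕ → (Fin n → ℤ) → ZMod 2) (hs : ∀ j < n, Good M n (s j)) :
    Phi M n (fun q => ∏ j ∈ Finset.range n, (s j (q j) + s j (q (j+1)))) = 1 := by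
  induction n with
  | zero => simp [Phi]
  | succ n ih =>
    rw [hybrid (n+1) (Phi M (n+1)) Phi_add ?_ s]
    swap
    · intro k hk β hβ
      rcases k with _ | k
      · exact Phi_zero β hβ
      · exact Phi_mid k hk β hβ
    simp only [Nat.add_eq_zero_iff, one_ne_zero, and_false, if_false, Nat.add_sub_cancel]
    rw [Phi_last]
    swap
    · intro q q' h
      rw [h 0 (by omega)]
      congr 1
      refine Finset.prod_congr rfl fun j hj => ?_
      have := Finset.mem_range.1 hj
      rw [h j (by omega), h (j+1) (by omega)]
    rw [Fin.sum_univ_castSucc, Finset.sum_eq_zero, zero_add]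
    · rw [← Phi_add, ← ih (fun j x => s (j+1) (Fin.snoc (α := fun _ => ℤ) x 0))
        (fun j hj => (hs (j+1) (by omega)).down)]
      congr 1
      funext q
      have e : ∀ j < n+1, ∀ x : Fin n → ℤ, s j (Fin.snoc (α := fun _ => ℤ) x (2 * M)) = 1 + s j (Fin.snoc (α := fun _ => ℤ) x 0) := by
        intro j hj x
        rw [(hs j hj).2 (Fin.last n) (by simp) _ (by simp), Fin.update_snoc_last]
      simp only [Fin.insertNth_last']
      rw [e 0 (by omega)]
      have : ∏ j ∈ Finset.range n, (s (j+1) (Fin.snoc (α := fun _ => ℤ) (q j) (2 * M)) + s (j+1) (Fin.snoc (α := fun _ => ℤ) (q (j+1)) (2 * M)))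
        = ∏ j ∈ Finset.range n, (s (j+1) (Fin.snoc (α := fun _ => ℤ) (q j) 0) + s (j+1) (Fin.snoc (α := fun _ => ℤ) (q (j+1)) 0)) := by
        refine Finset.prod_congr rfl fun j hj => ?_
        have := Finset.mem_range.1 hj
        rw [e _ (by omega), e _ (by omega)]
        linear_combination z2 1
      rw [this]
      linear_combination (∏ j ∈ Finset.range n, (s (j+1) (Fin.snoc (α := fun _ => ℤ) (q j) 0) + s (j+1) (Fin.snoc (α := fun _ => ℤ) (q (j+1)) 0))) * z2 (s 0 (Fin.snoc (α := fun _ => ℤ) (q 0) 0))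
    · intro i _
      rw [← Phi_reflect i, ← Phi_add]
      have e : ∀ j < n+1, ∀ x : Fin n → ℤ, s j (i.castSucc.insertNth (α := fun _ => ℤ) (2 * M) x) = s j (i.castSucc.insertNth (α := fun _ => ℤ) 0 (Function.update x i (2 * M - x i))) := by
        intro j hj x
        rw [(hs j hj).1 i.castSucc i.succ (by simp) _ (by simp)]
        congr 1
        have hsu : i.succ = i.castSucc.succAbove i := by simp
        funext l
        refine Fin.succAboveCases i.castSucc ?_ (fun l => ?_) l
        · rw [hsu, Function.update_of_ne (Fin.ne_succAbove _ _)]; simp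
        · by_cases hl : l = i
          · subst hl; rw [hsu, Function.update_self, Fin.insertNth_apply_succAbove, Fin.insertNth_apply_succAbove, Function.update_self]
          · rw [hsu, Function.update_of_ne (fun h => hl (Fin.succAbove_right_injective h)), Function.update_of_ne (Fin.succAbove_ne _ _)]
            simp [hl]
      have : ∀ q : ℕ → Fin n → ℤ, s 0 (i.castSucc.insertNth (α := fun _ => ℤ) (2 * M) (q 0)) * ∏ j ∈ Finset.range n, (s (j+1) (i.castSucc.insertNth (α := fun _ => ℤ) (2 * M) (q j)) + s (j+1) (i.castSucc.insertNth (α := fun _ => ℤ) (2 * M) (q (j+1))))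
        = s 0 (i.castSucc.insertNth (α := fun _ => ℤ) 0 (Function.update (q 0) i (2 * M - q 0 i))) * ∏ j ∈ Finset.range n, (s (j+1) (i.castSucc.insertNth (α := fun _ => ℤ) 0 (Function.update (q j) i (2 * M - q j i))) + s (j+1) (i.castSucc.insertNth (α := fun _ => ℤ) 0 (Function.update (q (j+1)) i (2 * M - q (j+1) i)))) := by
        intro q
        rw [e 0 (by omega)]
        congr 1
        refine Finset.prod_congr rfl fun j hj => ?_
        have := Finset.mem_range.1 hj
        rw [e _ (by omega), e _ (by omega)]
      simp only [this, z2]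
      simp [Phi]

/-- parametrization of the sphere -/
def P : (n : ℕ) → (Fin n → ℝ) → (Fin (n+1) → ℝ)
  | 0, _ => fun _ => 1
  | n+1, t => Fin.snoc (α := fun _ => ℝ) ((1 - 2 * t (Fin.last n)) • P n (Fin.init t))
      (t (Fin.last n) * (1 - t (Fin.last n)))

lemma P_cont (n : ℕ) : Continuous (P n) := by
  induction n with
  | zero => exact continuous_const
  | succ n ih =>
    show Continuous (fun t : Fin (n+1) → ℝ => Fin.snoc (α := fun _ => ℝ) ((1 - 2 * t (Fin.last n)) • P n (Fin.init t)) (t (Fin.last n) * (1 - t (Fin.last n))))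
    refine Continuous.finSnoc (A := fun _ => ℝ) ?_ (by fun_prop)
    have : Continuous (fun t : Fin (n+1) → ℝ => P n (Fin.init t)) := ih.comp (continuous_id.finInit (A := fun _ => ℝ))
    fun_prop

lemma P_ne (n : ℕ) (t : Fin n → ℝ) : P n t ≠ 0 := by
  induction n with
  | zero => intro h; have := congrFun h 0; simp [P] at this
  | succ n ih =>
    intro h
    have h1 := congrFun h (Fin.last _)
    have h2 : (1 - 2 * t (Fin.last n)) • P n (Fin.init t) = 0 := by
      funext i
      have := congrFun h i.castSucc
      simpa [P] using this
    simp only [P, Fin.snoc_last, Pi.zero_apply] at h1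
    rcases smul_eq_zero.1 h2 with h3 | h3
    · have : t (Fin.last n) = 1/2 := by linarith
      rw [this] at h1; norm_num at h1
    · exact ih _ h3

lemma P2 (n : ℕ) (i : Fin n) (hi : i.val + 1 = n) (t : Fin n → ℝ) (ht : t i = 1) :
    P n t = - P n (Function.update t i 0) := by
  rcases n with _ | n
  · exact i.elim0
  obtain rfl : i = Fin.last n := by ext; simp; omega
  funext k
  refine Fin.lastCases ?_ (fun k => ?_) k
  · simp [P, ht]
  · simp [P, ht]; ring

lemma P1 (n : ℕ) (i j : Fin n) (hij : j.val = i.val + 1) (t : Fin n → ℝ) (ht : t i = 1) :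
    P n t = P n (Function.update (Function.update t i 0) j (1 - t j)) := by
  induction n with
  | zero => exact i.elim0
  | succ n ih =>
    have hil : i.val < n := by omega
    obtain ⟨i, rfl⟩ : ∃ i' : Fin n, i = i'.castSucc := ⟨⟨i, hil⟩, rfl⟩
    have hil2 : i.castSucc ≠ Fin.last n := Fin.castSucc_ne_last i
    unfold P
    rcases Fin.eq_castSucc_or_eq_last j with ⟨j, rfl⟩ | rfl
    · rw [Fin.init_update_castSucc, Fin.init_update_castSucc, Function.update_of_ne (Fin.castSucc_ne_last j).symm,
        Function.update_of_ne hil2.symm, ih i j (by simpa using hij) (Fin.init t) ht]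
      rfl
    · rw [Fin.init_update_last, Fin.init_update_castSucc, Function.update_self,
        P2 n i (by simpa using hij.symm) (Fin.init t) ht]
      congr 1
      · funext k
        simp; ring
      · ring

open Classical in
/-- odd sign -/
noncomputable def S {n : ℕ} (g : (Fin n → ℝ) → ℝ) (v : Fin n → ℝ) : ZMod 2 :=
  if 0 < g v ∨ (g v = 0 ∧ WellOrderingRel v (-v)) then 1 else 0

lemma S_neg {n : ℕ} (g : (Fin n → ℝ) → ℝ) (v : Fin n → ℝ) (hv : v ≠ 0) (hg : g (-v) = - g v) :
    S g (-v) = 1 + S g v := by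
  have h2 : (1 : ZMod 2) + 1 = 0 := by decide
  have hne : v ≠ -v := by
    intro h; exact hv (self_eq_neg.1 h)
  have ha : WellOrderingRel v (-v) → ¬ WellOrderingRel (-v) v := fun h h' => asymm h h'
  have ht : ¬ WellOrderingRel v (-v) → WellOrderingRel (-v) v := by
    intro h
    rcases trichotomous_of WellOrderingRel v (-v) with h' | h' | h'
    · exact absurd h' h
    · exact absurd h' hne
    · exact h'
  unfold S
  rw [hg, neg_neg]
  rcases lt_trichotomy (g v) 0 with h | h | h
  · rw [if_pos (Or.inl (by linarith)), if_neg (by rintro (h' | h'); linarith; linarith [h'.1])]; simp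
  · by_cases h' : WellOrderingRel v (-v)
    · simp [h, h', ha h', h2]
    · simp [h, h', ht h']
  · rw [if_neg (by rintro (h' | h'); linarith; linarith [h'.1]), if_pos (Or.inl h), h2]

lemma S_ne {n : ℕ} (g : (Fin n → ℝ) → ℝ) (v w : Fin n → ℝ) (h : S g v + S g w ≠ 0) :
    |g v| ≤ |g v - g w| := by
  have h2 : (1 : ZMod 2) + 1 = 0 := by decide
  have key : ∀ u, (0 ≤ g u ∧ S g u = 1) ∨ (g u ≤ 0 ∧ S g u = 0) := by
    intro u
    unfold S
    split_ifs with h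
    · left; refine ⟨?_, rfl⟩; rcases h with h | h; exact h.le; exact h.1.ge
    · right; refine ⟨?_, rfl⟩; push Not at h; exact h.1
  rcases key v with ⟨a, b⟩ | ⟨a, b⟩ <;> rcases key w with ⟨c, d⟩ | ⟨c, d⟩
  · rw [b, d, h2] at h; exact absurd rfl h
  · rw [abs_of_nonneg a, abs_of_nonneg (by linarith)]; linarith
  · rw [abs_of_nonpos a, abs_of_nonpos (by linarith)]; linarith
  · rw [b, d] at h; exact absurd (by simp) h


/-- scaling -/
noncomputable def sc {n : ℕ} (M : ℕ) (t : Fin n → ℤ) : Fin n → ℝ := fun i => (t i : ℝ) / (2 * M)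

lemma sc_update {n : ℕ} (M : ℕ) (t : Fin n → ℤ) (i : Fin n) (a : ℤ) :
    sc M (Function.update t i a) = Function.update (sc M t) i ((a : ℝ) / (2 * M)) := by
  funext k
  by_cases h : k = i
  · subst h; simp [sc]
  · simp [sc, h]

lemma good_S {n : ℕ} (M : ℕ) (hM : 0 < M) (g : (Fin (n+1) → ℝ) → ℝ)
    (hg : ∀ v ≠ 0, g (-v) = - g v) : Good M n (fun t => S g (P n (sc M t))) := by
  have hM' : (0:ℝ) < M := by exact_mod_cast hM
  have h1 : ∀ t : Fin n → ℤ, ∀ i, t i = 2 * M → sc M t i = 1 := by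
    intro t i h
    simp only [sc, h]; push_cast; field_simp
  constructor
  · intro i j hij t ht
    show S g (P n (sc M t)) = S g (P n (sc M _))
    rw [P1 n i j hij (sc M t) (h1 t i ht), sc_update, sc_update]
    congr 4
    · simp
    · simp only [sc]; push_cast; field_simp
  · intro i hi t ht
    show S g (P n (sc M t)) = 1 + S g (P n (sc M _))
    rw [P2 n i hi (sc M t) (h1 t i ht), S_neg g _ (P_ne _ _) (hg _ (P_ne _ _)), sc_update]
    simp

lemma path_mem {M n : ℕ} (h : Fin n → Fin M × Bool) (τ : Equiv.Perm (Fin n)) (k : ℕ) :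
    sc M (path h τ k) ∈ Set.Icc (0 : Fin n → ℝ) 1 := by
  have key : ∀ i, 0 ≤ path h τ k i ∧ path h τ k i ≤ 2 * M := by
    intro i
    have := (h i).1.isLt
    simp only [path, od, ev]
    split_ifs <;> omega
  constructor
  · intro i
    have : (0:ℝ) ≤ path h τ k i := by exact_mod_cast (key i).1
    simp only [sc, Pi.zero_apply]; positivity
  · intro i
    have : (path h τ k i : ℝ) ≤ 2 * M := by exact_mod_cast (key i).2
    simp only [sc, Pi.one_apply]
    exact div_le_one_of_le₀ this (by positivity)

lemma path_dist {M n : ℕ} (hM : 0 < M) (h : Fin n → Fin M × Bool) (τ : Equiv.Perm (Fin n)) (k l : ℕ) :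
    dist (sc M (path h τ k)) (sc M (path h τ l)) ≤ 1 / M := by
  have hM' : (0:ℝ) < M := by exact_mod_cast hM
  rw [dist_pi_le_iff (by positivity)]
  intro i
  have key : |path h τ k i - path h τ l i| ≤ 1 := by
    rw [abs_le]
    simp only [path, od, ev]
    split_ifs <;> omega
  have key' : |(path h τ k i : ℝ) - path h τ l i| ≤ 1 := by exact_mod_cast key
  rw [Real.dist_eq, sc, sc, ← sub_div, abs_div, abs_of_pos (by positivity : (0:ℝ) < 2 * M)]
  rw [div_le_div_iff₀ (by positivity) hM']
  nlinarith

theorem borsuk_ulam (n : ℕ) (g : (Fin (n+1) → ℝ) → (Fin n → ℝ))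
    (hg : ∀ v ≠ 0, g (-v) = - g v) (hc : ∀ v ≠ 0, ContinuousAt g v) :
    ∃ v ≠ 0, g v = 0 := by
  by_contra! hno
  let G : (Fin n → ℝ) → (Fin n → ℝ) := fun t => g (P n t)
  have hG : Continuous G := continuous_iff_continuousAt.2 fun t =>
    ContinuousAt.comp (hc _ (P_ne n t)) (P_cont n).continuousAt
  have hK : IsCompact (Set.Icc (0 : Fin n → ℝ) 1) := isCompact_Icc
  obtain ⟨t0, -, hmin⟩ := hK.exists_isMinOn ⟨0, by simp⟩ hG.norm.continuousOn
  set ε := ‖G t0‖ with hε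
  have hεpos : 0 < ε := norm_pos_iff.2 (hno _ (P_ne n t0))
  have huc := hK.uniformContinuousOn_of_continuous hG.continuousOn
  rw [Metric.uniformContinuousOn_iff] at huc
  obtain ⟨δ, hδ, huc⟩ := huc (ε/2) (by positivity)
  obtain ⟨M, hM⟩ := exists_nat_one_div_lt hδ
  have hW := W_eq_one (M+1) n (fun j t => if hj : j < n then S (fun v => g v ⟨j, hj⟩) (P n (sc (M+1) t)) else 0)
    (by
      intro j hj
      simp only [hj, dif_pos]
      exact good_S (M+1) (by omega) _ (fun v hv => by rw [hg v hv]; rfl))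
  have : ∃ (τ : Equiv.Perm (Fin n)) (h : Fin n → Fin (M+1) × Bool), ∀ j : Fin n,
      S (fun v => g v j) (P n (sc (M+1) (path h τ j))) + S (fun v => g v j) (P n (sc (M+1) (path h τ (j+1)))) ≠ 0 := by
    unfold Phi at hW
    obtain ⟨τ, -, hτ⟩ := Finset.exists_ne_zero_of_sum_ne_zero (by rw [hW]; exact one_ne_zero)
    obtain ⟨h, -, hh⟩ := Finset.exists_ne_zero_of_sum_ne_zero hτ
    refine ⟨τ, h, fun j => ?_⟩
    have := Finset.prod_ne_zero_iff.1 hh j.val (Finset.mem_range.2 j.isLt)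
    simpa using this
  obtain ⟨τ, h, hh⟩ := this
  have hd : ∀ k l, dist (G (sc (M+1) (path h τ k))) (G (sc (M+1) (path h τ l))) < ε/2 := by
    intro k l
    refine huc _ (path_mem h τ k) _ (path_mem h τ l) ((path_dist (by omega) h τ k l).trans_lt ?_)
    push_cast; exact hM
  have hlt : ‖G (sc (M+1) (path h τ 0))‖ < ε := by
    rw [pi_norm_lt_iff hεpos]
    intro j
    have h1 := (dist_pi_lt_iff (by positivity)).1 (hd 0 j) j
    have h2 := (dist_pi_lt_iff (by positivity)).1 (hd j (j+1)) j
    have h3 := S_ne _ _ _ (hh j)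
    rw [Real.dist_eq] at h1 h2
    rw [Real.norm_eq_abs]
    have h4 : |G (sc (M+1) (path h τ j)) j| < ε/2 := lt_of_le_of_lt h3 h2
    have h5 := abs_add_le (G (sc (M+1) (path h τ 0)) j - G (sc (M+1) (path h τ j)) j) (G (sc (M+1) (path h τ j)) j)
    rw [sub_add_cancel] at h5
    linarith
  exact absurd hlt (not_lt.2 (hmin (path_mem h τ 0)))

lemma null_zero {d : ℕ} (hd : 0 < d) (a c : ℝ) (b : EuclideanSpace ℝ (Fin d))
    (h : ¬(a = 0 ∧ b = 0 ∧ c = 0)) :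
    volume {x : EuclideanSpace ℝ (Fin d) | a * ‖x‖ ^ 2 + ⟪b, x⟫ + c = 0} = 0 := by
  haveI : Nonempty (Fin d) := ⟨⟨0, hd⟩⟩
  by_cases ha : a = 0
  · subst ha
    by_cases hb : b = 0
    · subst hb
      have : c ≠ 0 := by simpa using h
      simp [this]
    · by_cases hemp : ∃ x0 : EuclideanSpace ℝ (Fin d), ⟪b, x0⟫ + c = 0
      · obtain ⟨x0, hx0⟩ := hemp
        have hk : LinearMap.ker (innerₛₗ ℝ b) ≠ ⊤ := by
          intro h
          have : b ∈ LinearMap.ker (innerₛₗ ℝ b) := by rw [h]; trivial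
          simp at this
          exact hb this
        have hn := Measure.addHaar_affineSubspace (volume : Measure (EuclideanSpace ℝ (Fin d)))
          (AffineSubspace.mk' x0 (LinearMap.ker (innerₛₗ ℝ b))) (by
            intro h
            apply hk
            have := congrArg AffineSubspace.direction h
            simpa using this)
        refine measure_mono_null ?_ hn
        intro x hx
        simp only [Set.mem_setOf_eq, zero_mul, zero_add] at hx
        simp only [SetLike.mem_coe, AffineSubspace.mem_mk', LinearMap.mem_ker, vsub_eq_sub, map_sub]
        simp only [innerₛₗ_apply_apply]
        linarith
      · push Not at hemp
        have : {x : EuclideanSpace ℝ (Fin d) | 0 * ‖x‖ ^ 2 + ⟪b, x⟫ + c = 0} = ∅ := by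
          ext x; simpa using hemp x
        rw [this]; simp
  · refine measure_mono_null ?_ (Measure.addHaar_sphere volume (-((1/(2*a)) • b)) (√(‖(1/(2*a)) • b‖^2 - c/a)))
    intro x hx
    simp only [Set.mem_setOf_eq] at hx
    rw [mem_sphere_iff_norm, sub_neg_eq_add]
    have : ‖x + (1/(2*a)) • b‖^2 = ‖(1/(2*a)) • b‖^2 - c/a := by
      rw [norm_add_sq_real, inner_smul_right, real_inner_comm]
      field_simp
      linear_combination hx
    rw [← this, Real.sqrt_sq (norm_nonneg _)]

/-- the function -/
noncomputable def q {d : ℕ} (v : Fin (d+2) → ℝ) (x : EuclideanSpace ℝ (Fin d)) : ℝ :=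
  v 0 * ‖x‖ ^ 2 + ⟪(WithLp.toLp 2 (fun i : Fin d => v i.succ.succ) : EuclideanSpace ℝ (Fin d)), x⟫ + v 1

lemma q_cont_x {d : ℕ} (v : Fin (d+2) → ℝ) : Continuous (q v) := by
  unfold q; fun_prop

lemma q_cont_v {d : ℕ} (x : EuclideanSpace ℝ (Fin d)) : Continuous (fun v => q v x) := by
  unfold q; fun_prop

lemma q_neg {d : ℕ} (v : Fin (d+2) → ℝ) (x : EuclideanSpace ℝ (Fin d)) : q (-v) x = - q v x := by
  have : (WithLp.toLp 2 (fun i : Fin d => (-v) i.succ.succ) : EuclideanSpace ℝ (Fin d)) =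
    - WithLp.toLp 2 (fun i : Fin d => v i.succ.succ) := by ext i; simp
  unfold q
  rw [this, inner_neg_left]
  simp only [Pi.neg_apply]; ring

lemma v_ne {d : ℕ} (v : Fin (d+2) → ℝ) (hv : v ≠ 0) :
    ¬ (v 0 = 0 ∧ (WithLp.toLp 2 (fun i : Fin d => v i.succ.succ) : EuclideanSpace ℝ (Fin d)) = 0 ∧ v 1 = 0) := by
  rintro ⟨h0, h1, h2⟩
  apply hv
  funext i
  refine Fin.cases h0 (fun i => ?_) i
  refine Fin.cases h2 (fun i => ?_) i
  have := congrArg (fun w : EuclideanSpace ℝ (Fin d) => w i) h1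
  simpa using this

/-- real sign -/
noncomputable def sg (y : ℝ) : ℝ := (Set.Ioi 0).indicator 1 y - (Set.Iio 0).indicator 1 y

lemma sg_meas : Measurable sg :=
  (measurable_one.indicator measurableSet_Ioi).sub (measurable_one.indicator measurableSet_Iio)

lemma sg_bound (y : ℝ) : ‖sg y‖ ≤ 1 := by
  unfold sg
  rcases lt_trichotomy y 0 with h | h | h
  · simp [h, h.le]
  · simp [h]
  · simp [h, h.le]

lemma sg_neg (y : ℝ) : sg (-y) = - sg y := by
  unfold sg
  simp [Set.indicator]

lemma sg_cont (y : ℝ) (hy : y ≠ 0) : ContinuousAt sg y := by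
  rcases lt_or_gt_of_ne hy with h | h
  · have : (fun _ => (-1:ℝ)) =ᶠ[nhds y] sg := by
      filter_upwards [Iio_mem_nhds h] with z hz
      have hz : z < 0 := hz
      simp [sg, hz, hz.le]
    exact continuousAt_const.congr this
  · have : (fun _ => (1:ℝ)) =ᶠ[nhds y] sg := by
      filter_upwards [Ioi_mem_nhds h] with z hz
      have hz : 0 < z := hz
      simp [sg, hz, hz.le]
    exact continuousAt_const.congr this

lemma sg_integral {α : Type*} [MeasurableSpace α] (μ : Measure α) [IsFiniteMeasure μ] (f : α → ℝ)
    (hf : Measurable f) : ∫ x, sg (f x) ∂μ = μ.real {x | 0 < f x} - μ.real {x | f x < 0} := by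
  have h1 : MeasurableSet {x | 0 < f x} := measurableSet_lt measurable_const hf
  have h2 : MeasurableSet {x | f x < 0} := measurableSet_lt hf measurable_const
  have : (fun x => sg (f x)) = fun x => {x | 0 < f x}.indicator 1 x - {x | f x < 0}.indicator 1 x := by
    funext x; rfl
  rw [this, integral_sub, integral_indicator_one h1, integral_indicator_one h2]
  · exact (integrable_const (1:ℝ)).indicator h1
  · exact (integrable_const (1:ℝ)).indicator h2

end BU

/-- Stone–Tukey corollary: `d+1` measures in `ℝ^d` can be simultaneously
halved by a sphere (or hyperplane, in the degenerate case `a = 0`). -/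
theorem sphere_halving (d : ℕ) (hd : 0 < d)
    (μ : Fin (d + 1) → Measure (EuclideanSpace ℝ (Fin d)))
    (hfin : ∀ i, IsFiniteMeasure (μ i))
    (hac : ∀ i, μ i ≪ volume) :
    ∃ (a c : ℝ) (b : EuclideanSpace ℝ (Fin d)),
      ¬(a = 0 ∧ b = 0 ∧ c = 0) ∧
      ∀ i, μ i {x | 0 ≤ a * ‖x‖ ^ 2 + ⟪b, x⟫ + c}
          = μ i {x | a * ‖x‖ ^ 2 + ⟪b, x⟫ + c ≤ 0} := by
  have hnull : ∀ v : Fin (d+2) → ℝ, v ≠ 0 → ∀ i, ∀ᵐ x ∂(μ i), BU.q v x ≠ 0 := by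
    intro v hv i
    have := hac i (BU.null_zero hd _ _ _ (BU.v_ne v hv))
    rw [ae_iff]
    simpa [BU.q] using this
  obtain ⟨v, hv, h0⟩ := BU.borsuk_ulam (d+1) (fun v i => ∫ x, BU.sg (BU.q v x) ∂(μ i))
    (by
      intro v _
      funext i
      simp only [BU.q_neg, BU.sg_neg, Pi.neg_apply]
      rw [integral_neg])
    (by
      intro v hv
      rw [continuousAt_pi]
      intro i
      refine continuousAt_of_dominated (bound := fun _ => 1) ?_ ?_ (integrable_const _) ?_
      · exact Filter.Eventually.of_forall fun w =>
          (BU.sg_meas.comp (BU.q_cont_x w).measurable).aestronglyMeasurable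
      · exact Filter.Eventually.of_forall fun w => Filter.Eventually.of_forall fun x => BU.sg_bound _
      · filter_upwards [hnull v hv i] with x hx
        exact ContinuousAt.comp (f := fun w => BU.q w x) (BU.sg_cont _ hx) (BU.q_cont_v x).continuousAt)
  refine ⟨v 0, v 1, WithLp.toLp 2 (fun i : Fin d => v i.succ.succ), BU.v_ne v hv, fun i => ?_⟩
  have h1 := congrFun h0 i
  simp only [Pi.zero_apply] at h1
  rw [BU.sg_integral _ _ (BU.q_cont_x v).measurable, sub_eq_zero, measureReal_eq_measureReal_iff] at h1
  have e1 : μ i {x | 0 ≤ BU.q v x} = μ i {x | 0 < BU.q v x} := by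
    apply measure_congr
    filter_upwards [hnull v hv i] with x hx
    exact propext ⟨fun h => lt_of_le_of_ne h hx.symm, le_of_lt⟩
  have e2 : μ i {x | BU.q v x ≤ 0} = μ i {x | BU.q v x < 0} := by
    apply measure_congr
    filter_upwards [hnull v hv i] with x hx
    exact propext ⟨fun h => lt_of_le_of_ne h hx, le_of_lt⟩
  exact e1.trans (h1.trans e2.symm)
end

section
/- Let n be an odd positive integer. Then there is no family T₁, …, T_n of n triangles in ℝ² such that the T_j have pairwise disjoint interiors, their union is the unit square [0,1] × [0,1], and all T_j have the same area; equivalently, the unit square cannot be partitioned into an odd number of triangles of equal area. -/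
open MeasureTheory

namespace Mk
open Filter Topology Classical

noncomputable def D3 (p q r : ℝ × ℝ) : ℝ :=
  (q.1 - p.1) * (r.2 - p.2) - (q.2 - p.2) * (r.1 - p.1)

def In (p q r X : ℝ × ℝ) : Prop :=
  (0 < D3 p q X ∧ 0 < D3 q r X ∧ 0 < D3 r p X) ∨
  (D3 p q X < 0 ∧ D3 q r X < 0 ∧ D3 r p X < 0)

noncomputable def ind (p : Prop) : ZMod 2 := if p then 1 else 0

lemma two0 : (1 + 1 : ZMod 2) = 0 := by decide

lemma finEv {S : Set ℝ} (hS : S.Finite) : ∀ᶠ ε in 𝓝[>] (0:ℝ), ε ∉ S := by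
  have h1 : (S \ {0})ᶜ ∈ 𝓝 (0:ℝ) :=
    (hS.subset Set.sdiff_subset).isClosed.isOpen_compl.mem_nhds (by simp)
  filter_upwards [mem_nhdsWithin_of_mem_nhds h1, self_mem_nhdsWithin] with x hx hx0 hS
  exact hx ⟨hS, ne_of_gt hx0⟩

/-- One dimensional endpoint lemma. -/
lemma oneD {ι : Type*} (s : Finset ι) (a b : ι → ℝ) (hab : ∀ i, a i ≠ b i) (g : ℝ → ZMod 2)
    (S : Set ℝ) (hS : S.Finite)
    (h : ∀ t, t ∉ S → ∑ i ∈ s, ind ((t - a i) * (t - b i) < 0) = 0) :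
    ∑ i ∈ s, (g (a i) + g (b i)) = 0 := by
  have key : ∀ t : ℝ, ∑ i ∈ s, (ind (a i = t) + ind (b i = t)) = 0 := by
    intro t
    have e1 : ∀ i, ∀ᶠ ε in 𝓝[>] (0:ℝ),
        ind (a i = t) + ind (b i = t) = ind ((t + ε - a i) * (t + ε - b i) < 0) +
          ind ((t - ε - a i) * (t - ε - b i) < 0) := by
      intro i
      have hpos : ∀ c : ℝ, 0 < c → ∀ᶠ ε in 𝓝[>] (0:ℝ), 0 < ε ∧ ε < c := by
        intro c hc
        exact Ioo_mem_nhdsGT hc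
      have hd : 0 < |a i - b i| := abs_pos.2 (sub_ne_zero.2 (hab i))
      by_cases ha : a i = t
      · have hb : ¬ b i = t := fun hb => hab i (ha.trans hb.symm)
        filter_upwards [hpos _ hd] with ε ⟨h0, h1⟩
        subst ha
        rcases lt_or_gt_of_ne (hab i) with hlt | hlt
        · rw [abs_of_neg (by linarith)] at h1
          rw [ind, ind, ind, ind, if_pos rfl, if_neg hb, if_pos (by nlinarith),
            if_neg (by nlinarith)]
        · rw [abs_of_pos (by linarith)] at h1
          rw [ind, ind, ind, ind, if_pos rfl, if_neg hb, if_neg (by nlinarith),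
            if_pos (by nlinarith)]
          rfl
      · by_cases hb : b i = t
        · filter_upwards [hpos _ hd] with ε ⟨h0, h1⟩
          subst hb
          rcases lt_or_gt_of_ne (hab i) with hlt | hlt
          · rw [abs_of_neg (by linarith)] at h1
            rw [ind, ind, ind, ind, if_pos rfl, if_neg ha, if_neg (by nlinarith),
              if_pos (by nlinarith)]
          · rw [abs_of_pos (by linarith)] at h1
            rw [ind, ind, ind, ind, if_pos rfl, if_neg ha, if_pos (by nlinarith),
              if_neg (by nlinarith)]
            rfl
        · have hne : (t - a i) * (t - b i) ≠ 0 :=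
            mul_ne_zero (sub_ne_zero.2 (Ne.symm ha)) (sub_ne_zero.2 (Ne.symm hb))
          have c1 : Tendsto (fun ε : ℝ => (t + ε - a i) * (t + ε - b i)) (𝓝[>] 0)
              (𝓝 ((t - a i) * (t - b i))) := by
            have : Continuous (fun ε : ℝ => (t + ε - a i) * (t + ε - b i)) := by fun_prop
            have := this.tendsto 0
            simp only [add_zero] at this
            exact this.mono_left nhdsWithin_le_nhds
          have c2 : Tendsto (fun ε : ℝ => (t - ε - a i) * (t - ε - b i)) (𝓝[>] 0)
              (𝓝 ((t - a i) * (t - b i))) := by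
            have : Continuous (fun ε : ℝ => (t - ε - a i) * (t - ε - b i)) := by fun_prop
            have := this.tendsto 0
            simp only [sub_zero] at this
            exact this.mono_left nhdsWithin_le_nhds
          rcases lt_or_gt_of_ne hne with hlt | hlt
          · filter_upwards [c1.eventually_lt_const hlt, c2.eventually_lt_const hlt] with ε h1 h2
            rw [ind, ind, ind, ind, if_neg ha, if_neg hb, if_pos h1, if_pos h2]; rfl
          · filter_upwards [c1.eventually_const_lt hlt, c2.eventually_const_lt hlt] with ε h1 h2
            rw [ind, ind, ind, ind, if_neg ha, if_neg hb, if_neg h1.not_gt, if_neg h2.not_gt]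
    have e2 : ∀ᶠ ε in 𝓝[>] (0:ℝ), ∀ i ∈ s,
        ind (a i = t) + ind (b i = t) = ind ((t + ε - a i) * (t + ε - b i) < 0) +
          ind ((t - ε - a i) * (t - ε - b i) < 0) :=
      (Finset.eventually_all s).2 fun i _ => e1 i
    have e3 : ∀ᶠ ε in 𝓝[>] (0:ℝ), t + ε ∉ S :=
      finEv (S := (fun ε => t + ε) ⁻¹' S) (hS.preimage (by intro x _ y _ h; simpa using h))
    have e4 : ∀ᶠ ε in 𝓝[>] (0:ℝ), t - ε ∉ S :=
      finEv (S := (fun ε => t - ε) ⁻¹' S) (hS.preimage (by intro x _ y _ h; simpa using h))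
    obtain ⟨ε, h2, h3, h4⟩ := (e2.and (e3.and e4)).exists
    rw [Finset.sum_congr rfl h2, Finset.sum_add_distrib, h _ h3, h _ h4, add_zero]
  have expand : ∀ i ∈ s, g (a i) + g (b i) =
      ∑ t ∈ s.image a ∪ s.image b, g t * (ind (a i = t) + ind (b i = t)) := by
    intro i hi
    simp only [mul_add, Finset.sum_add_distrib, ind, mul_ite, mul_one, mul_zero]
    rw [Finset.sum_ite_eq, Finset.sum_ite_eq, if_pos, if_pos]
    · exact Finset.mem_union_right _ (Finset.mem_image_of_mem _ hi)
    · exact Finset.mem_union_left _ (Finset.mem_image_of_mem _ hi)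
  rw [Finset.sum_congr rfl expand, Finset.sum_comm]
  refine Finset.sum_eq_zero fun t _ => ?_
  rw [← Finset.mul_sum, key, mul_zero]

lemma signs (z1 z2 z3 d1 d2 d3 : ℝ) (h1 : z1 ≠ 0) (h2 : z2 ≠ 0) (h3 : z3 ≠ 0)
    (e1 : d1 ≠ 0) (e2 : d2 ≠ 0) (e3 : d3 ≠ 0) (h : d1 * z3 + d2 * z1 + d3 * z2 = 0) :
    ind ((0 < d1 ∧ 0 < d2 ∧ 0 < d3) ∨ (d1 < 0 ∧ d2 < 0 ∧ d3 < 0)) =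
      ind (z1 * z2 < 0 ∧ d1 * (z2 - z1) < 0) + ind (z2 * z3 < 0 ∧ d2 * (z3 - z2) < 0) +
      ind (z3 * z1 < 0 ∧ d3 * (z1 - z3) < 0) := by
  have A : ∀ d z w : ℝ, z < 0 → 0 < w → (d * (w - z) < 0 ↔ d < 0) := by
    intro d z w hz hw
    constructor
    · intro hh; by_contra hc; push Not at hc; nlinarith [mul_nonneg hc (by linarith : 0 ≤ w - z)]
    · intro hh; nlinarith
  have B : ∀ d z w : ℝ, z < 0 → 0 < w → (d * (z - w) < 0 ↔ 0 < d) := by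
    intro d z w hz hw
    rw [← A (-d) z w hz hw |>.trans neg_lt_zero]
    constructor <;> intro hh <;> linarith
  have C1 : ∀ z w : ℝ, z < 0 → 0 < w → (z * w < 0 ↔ True) := fun z w hz hw => by
    simpa using mul_neg_of_neg_of_pos hz hw
  have C2 : ∀ z w : ℝ, z < 0 → 0 < w → (w * z < 0 ↔ True) := fun z w hz hw => by
    simpa using mul_neg_of_pos_of_neg hw hz
  have C3 : ∀ z w : ℝ, 0 < z → 0 < w → (z * w < 0 ↔ False) := fun z w hz hw => by
    simpa using (mul_pos hz hw).le
  have C4 : ∀ z w : ℝ, z < 0 → w < 0 → (z * w < 0 ↔ False) := fun z w hz hw => by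
    simpa using (mul_pos_of_neg_of_neg hz hw).le
  rcases lt_or_gt_of_ne h1 with a1 | a1 <;> rcases lt_or_gt_of_ne h2 with a2 | a2 <;>
  rcases lt_or_gt_of_ne h3 with a3 | a3 <;> rcases lt_or_gt_of_ne e1 with b1 | b1 <;>
  rcases lt_or_gt_of_ne e2 with b2 | b2 <;> rcases lt_or_gt_of_ne e3 with b3 | b3 <;>
  first
  | (exfalso
     have q1 := mul_pos (abs_pos.2 e1) (abs_pos.2 h3)
     have q2 := mul_pos (abs_pos.2 e2) (abs_pos.2 h1)
     have q3 := mul_pos (abs_pos.2 e3) (abs_pos.2 h2)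
     simp only [abs_of_pos, abs_of_neg, *] at q1 q2 q3
     linarith)
  | simp [ind, A, B, C1, C2, C3, C4, a1, a2, a3, b1, b2, b3, b1.not_gt, b2.not_gt, b3.not_gt, two0]

noncomputable def slope (p q : ℝ × ℝ) : ℝ := (q.2 - p.2) / (q.1 - p.1)
noncomputable def icpt (p q : ℝ × ℝ) : ℝ := p.2 - slope p q * p.1

lemma D3_eq (p q X : ℝ × ℝ) (h : p.1 ≠ q.1) :
    D3 p q X = (q.1 - p.1) * (X.2 - (slope p q * X.1 + icpt p q)) := by
  have : q.1 - p.1 ≠ 0 := sub_ne_zero.2 h.symm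
  unfold D3 icpt slope
  field_simp
  ring

lemma on1 (p q : ℝ × ℝ) : slope p q * p.1 + icpt p q = p.2 := by
  unfold icpt; ring

lemma on2 (p q : ℝ × ℝ) (h : p.1 ≠ q.1) : slope p q * q.1 + icpt p q = q.2 := by
  have : q.1 - p.1 ≠ 0 := sub_ne_zero.2 h.symm
  unfold icpt slope
  field_simp
  ring

lemma ind_and (p q : Prop) : ind (p ∧ q) = ind p * ind q := by
  unfold ind; by_cases hp : p <;> by_cases hq : q <;> simp [hp, hq]

lemma ind_congr {p q : Prop} (h : p ↔ q) : ind p = ind q := by rw [propext h]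

/-- Indicator of a triangle as a sum of its edge shadows. -/
lemma shadow (p q r X : ℝ × ℝ) (hpq : p.1 ≠ q.1) (hqr : q.1 ≠ r.1) (hrp : r.1 ≠ p.1)
    (xp : X.1 ≠ p.1) (xq : X.1 ≠ q.1) (xr : X.1 ≠ r.1)
    (h1 : D3 p q X ≠ 0) (h2 : D3 q r X ≠ 0) (h3 : D3 r p X ≠ 0) :
    ind (In p q r X) =
      ind ((X.1 - p.1) * (X.1 - q.1) < 0) * ind (X.2 < slope p q * X.1 + icpt p q) +
      ind ((X.1 - q.1) * (X.1 - r.1) < 0) * ind (X.2 < slope q r * X.1 + icpt q r) +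
      ind ((X.1 - r.1) * (X.1 - p.1) < 0) * ind (X.2 < slope r p * X.1 + icpt r p) := by
  have key : ∀ p q : ℝ × ℝ, p.1 ≠ q.1 →
      ind ((X.1 - p.1) * (X.1 - q.1) < 0) * ind (X.2 < slope p q * X.1 + icpt p q) =
      ind ((p.1 - X.1) * (q.1 - X.1) < 0 ∧ D3 p q X * ((q.1 - X.1) - (p.1 - X.1)) < 0) := by
    intro p q h
    rw [← ind_and, D3_eq p q X h]
    apply ind_congr
    have e1 : (X.1 - p.1) * (X.1 - q.1) = (p.1 - X.1) * (q.1 - X.1) := by ring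
    have e2 : (q.1 - p.1) * (X.2 - (slope p q * X.1 + icpt p q)) * ((q.1 - X.1) - (p.1 - X.1)) =
      (q.1 - p.1)^2 * (X.2 - (slope p q * X.1 + icpt p q)) := by ring
    have e3 : 0 < (q.1 - p.1)^2 := by
      have := sub_ne_zero.2 h.symm
      positivity
    have e4 : ∀ b : ℝ, (q.1 - p.1)^2 * b < 0 ↔ b < 0 := fun b =>
      ⟨fun h => by by_contra hc; push Not at hc; nlinarith [mul_nonneg e3.le hc],
        fun h => mul_neg_of_pos_of_neg e3 h⟩
    rw [e1, e2, e4, sub_neg]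
  rw [key p q hpq, key q r hqr, key r p hrp]
  exact signs _ _ _ _ _ _ (sub_ne_zero.2 xp.symm) (sub_ne_zero.2 xq.symm) (sub_ne_zero.2 xr.symm)
    h1 h2 h3 (by unfold D3; ring)

lemma parity {ι : Type*} [Fintype ι] (P : ι → Fin 3 → ℝ × ℝ)
    (hx : ∀ i k, (P i k).1 ≠ (P i (k + 1)).1)
    (f : ℝ × ℝ → ℝ × ℝ → ZMod 2)
    (hf : ∀ p q r, D3 p q r = 0 → f p q + f q r + f r p = 0)
    (hs : ∀ p q, f p q = f q p)
    (h : ∀ X : ℝ × ℝ, (∀ i k, D3 (P i k) (P i (k + 1)) X ≠ 0) →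
      ∑ i, ind (In (P i 0) (P i 1) (P i 2) X) = 0) :
    ∑ i, (f (P i 0) (P i 1) + f (P i 1) (P i 2) + f (P i 2) (P i 0)) = 0 := by
  let A : ι × Fin 3 → ℝ × ℝ := fun e => P e.1 e.2
  let B : ι × Fin 3 → ℝ × ℝ := fun e => P e.1 (e.2 + 1)
  have hAB : ∀ e, (A e).1 ≠ (B e).1 := fun e => hx e.1 e.2
  let m : ι × Fin 3 → ℝ := fun e => slope (A e) (B e)
  let c : ι × Fin 3 → ℝ := fun e => icpt (A e) (B e)
  have sum3 : ∀ (F : ι × Fin 3 → ZMod 2), ∑ e, F e = ∑ i, (F (i, 0) + F (i, 1) + F (i, 2)) := by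
    intro F
    rw [Fintype.sum_prod_type]
    simp [Fin.sum_univ_three]
  -- even coverage on each line
  have cover : ∀ l : ℝ × ℝ, ∃ S : Set ℝ, S.Finite ∧ ∀ t, t ∉ S →
      ∑ e with (m e, c e) = l, ind ((t - (A e).1) * (t - (B e).1) < 0) = 0 := by
    intro l
    refine ⟨(Set.range fun e => (A e).1) ∪
      ⋃ e, {t | (m e, c e) ≠ l ∧ m e * t + c e = l.1 * t + l.2}, ?_, ?_⟩
    · refine (Set.finite_range _).union (Set.finite_iUnion fun e => ?_)
      refine Set.Subsingleton.finite ?_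
      rintro x ⟨hx1, hx2⟩ y ⟨-, hy2⟩
      have : (m e - l.1) * (x - y) = 0 := by linarith
      rcases mul_eq_zero.1 this with h0 | h0
      · exfalso
        apply hx1
        have h1 : m e = l.1 := by linarith
        have h2 : c e = l.2 := by rw [h1] at hx2; linarith
        exact Prod.ext h1 h2
      · linarith
    · intro t ht
      have htA : ∀ e, t ≠ (A e).1 := fun e he => ht (Or.inl ⟨e, he.symm⟩)
      have htl : ∀ e, m e * t + c e = l.1 * t + l.2 ↔ (m e, c e) = l := by
        intro e
        constructor
        · intro he
          by_contra hc
          exact ht (Or.inr (Set.mem_iUnion.2 ⟨e, hc, he⟩))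
        · rintro rfl; rfl
      have sh : ∀ y : ℝ, (∀ e, y ≠ m e * t + c e) →
          ∑ e, ind ((t - (A e).1) * (t - (B e).1) < 0) * ind (y < m e * t + c e) = 0 := by
        intro y hy
        have hD : ∀ i k, D3 (P i k) (P i (k + 1)) (t, y) ≠ 0 := by
          intro i k
          rw [D3_eq _ _ _ (hx i k)]
          exact mul_ne_zero (sub_ne_zero.2 (hx i k).symm) (sub_ne_zero.2 (hy (i, k)))
        rw [← h (t, y) hD, sum3]
        refine Finset.sum_congr rfl fun i _ => ?_
        exact (shadow (P i 0) (P i 1) (P i 2) (t, y) (hx i 0) (hx i 1) (hx i 2)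
          (htA (i, 0)) (htA (i, 1)) (htA (i, 2)) (hD i 0) (hD i 1) (hD i 2)).symm
      set y0 := l.1 * t + l.2 with hy0
      have ev : ∀ᶠ ε in 𝓝[>] (0:ℝ), ∀ e, y0 + ε ≠ m e * t + c e ∧ y0 - ε ≠ m e * t + c e ∧
          ind ((m e, c e) = l) = ind (y0 - ε < m e * t + c e) + ind (y0 + ε < m e * t + c e) := by
        refine eventually_all.2 fun e => ?_
        rcases lt_trichotomy (m e * t + c e) y0 with hlt | heq | hgt
        · have : 0 < y0 - (m e * t + c e) := by linarith
          filter_upwards [Ioo_mem_nhdsGT this] with ε ⟨h0, h1⟩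
          refine ⟨by linarith, by linarith, ?_⟩
          rw [← htl, ind, ind, ind, if_neg hlt.ne, if_neg (by linarith), if_neg (by linarith)]; rfl
        · filter_upwards [self_mem_nhdsWithin] with ε (h0 : 0 < ε)
          refine ⟨by linarith, by linarith, ?_⟩
          rw [← htl, ind, ind, ind, if_pos heq, if_pos (by linarith), if_neg (by linarith)]; rfl
        · have : 0 < (m e * t + c e) - y0 := by linarith
          filter_upwards [Ioo_mem_nhdsGT this] with ε ⟨h0, h1⟩
          refine ⟨by linarith, by linarith, ?_⟩
          rw [← htl, ind, ind, ind, if_neg hgt.ne', if_pos (by linarith), if_pos (by linarith)]; rfl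
      obtain ⟨ε, hε⟩ := ev.exists
      have s1 := sh (y0 + ε) fun e => (hε e).1
      have s2 := sh (y0 - ε) fun e => (hε e).2.1
      have : ∑ e with (m e, c e) = l, ind ((t - (A e).1) * (t - (B e).1) < 0) =
          ∑ e, ind ((t - (A e).1) * (t - (B e).1) < 0) * ind ((m e, c e) = l) := by
        rw [Finset.sum_filter]
        refine Finset.sum_congr rfl fun e _ => ?_
        by_cases hc : (m e, c e) = l <;> simp [ind, hc]
      rw [this, Finset.sum_congr rfl fun e _ => by rw [(hε e).2.2, mul_add],
        Finset.sum_add_distrib, s1, s2, add_zero]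
  have tot : ∑ e, f (A e) (B e) = 0 := by
    rw [← Finset.sum_fiberwise_of_maps_to (s := Finset.univ)
      (t := Finset.univ.image fun e => (m e, c e)) (g := fun e => (m e, c e))
      (fun e _ => Finset.mem_image_of_mem _ (Finset.mem_univ e))]
    refine Finset.sum_eq_zero fun l _ => ?_
    obtain ⟨S, hS, hcov⟩ := cover l
    rw [← oneD _ (fun e => (A e).1) (fun e => (B e).1) hAB
      (fun t => f (t, l.1 * t + l.2) (0, l.2)) S hS hcov]
    refine Finset.sum_congr rfl fun e he => ?_
    have hl : (m e, c e) = l := (Finset.mem_filter.1 he).2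
    have eA : ((A e).1, l.1 * (A e).1 + l.2) = A e := by
      rw [← hl]; exact Prod.ext rfl (on1 _ _)
    have eB : ((B e).1, l.1 * (B e).1 + l.2) = B e := by
      rw [← hl]; exact Prod.ext rfl (on2 _ _ (hAB e))
    have := hf (A e) (B e) (0, l.2) (by rw [← eA, ← eB]; unfold D3; simp only; ring)
    rw [eA, eB, hs (A e) (0, l.2)]
    have h2 : ∀ a b c : ZMod 2, a + b + c = 0 → a = c + b := by decide
    exact h2 _ _ _ this
  rw [sum3] at tot
  exact tot

lemma exists_val : ∃ (V : ValuationSubring ℝ), V.valuation 2 < 1 := by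
  let R : Subring ℝ := (Int.castRingHom ℝ).range
  have hR : ∀ x ∈ R, ∃ k : ℤ, (k : ℝ) = x := by
    rintro x ⟨k, hk⟩; exact ⟨k, by simpa using hk⟩
  have hI : Ideal.span {(2 : R)} ≠ ⊤ := by
    rw [Ne, Ideal.eq_top_iff_one, Ideal.mem_span_singleton]
    rintro ⟨⟨x, hx⟩, hc⟩
    obtain ⟨k, rfl⟩ := hR x hx
    have h1 : (1 : ℝ) = 2 * (k : ℝ) := congrArg Subtype.val hc
    have h2 : (1 : ℤ) = 2 * k := by exact_mod_cast h1
    omega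
  obtain ⟨V, hV, hV2⟩ := Ideal.image_subset_nonunits_valuationSubring _ hI
  refine ⟨V, ?_⟩
  have : (2 : ℝ) ∈ V.nonunits := hV2 ⟨2, Ideal.subset_span rfl, rfl⟩
  exact V.mem_nonunits_iff.1 this

section color
variable (V : ValuationSubring ℝ)

noncomputable def col (p : ℝ × ℝ) : Fin 3 :=
  if V.valuation p.1 < 1 ∧ V.valuation p.2 < 1 then 0
  else if V.valuation p.2 ≤ V.valuation p.1 then 1 else 2

lemma col0 {p : ℝ × ℝ} (h : col V p = 0) : V.valuation p.1 < 1 ∧ V.valuation p.2 < 1 := by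
  by_contra hc
  unfold col at h
  rw [if_neg hc] at h
  split_ifs at h
  all_goals simp at h

lemma col1 {p : ℝ × ℝ} (h : col V p = 1) : 1 ≤ V.valuation p.1 ∧
    V.valuation p.2 ≤ V.valuation p.1 := by
  unfold col at h
  split_ifs at h with h1 h2
  · simp at h
  · refine ⟨?_, h2⟩
    by_contra hc
    push Not at hc
    exact h1 ⟨hc, h2.trans_lt hc⟩
  · simp at h

lemma col2 {p : ℝ × ℝ} (h : col V p = 2) : 1 ≤ V.valuation p.2 ∧
    V.valuation p.1 < V.valuation p.2 := by
  unfold col at h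
  split_ifs at h with h1 h2
  · simp at h
  · simp at h
  · push Not at h2
    refine ⟨?_, h2⟩
    by_contra hc
    push Not at hc
    exact h1 ⟨h2.trans hc, hc⟩

lemma val_rainbow {p q r : ℝ × ℝ} (hp : col V p = 0) (hq : col V q = 1) (hr : col V r = 2) :
    1 ≤ V.valuation (D3 p q r) := by
  obtain ⟨p1, p2⟩ := col0 V hp
  obtain ⟨q1, q2⟩ := col1 V hq
  obtain ⟨r1, r2⟩ := col2 V hr
  have a1 : V.valuation (q.1 - p.1) = V.valuation q.1 :=
    Valuation.map_sub_eq_of_lt_left _ (p1.trans_le q1)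
  have a2 : V.valuation (r.2 - p.2) = V.valuation r.2 :=
    Valuation.map_sub_eq_of_lt_left _ (p2.trans_le r1)
  have a3 : V.valuation (q.2 - p.2) ≤ V.valuation q.1 :=
    (Valuation.map_sub _ _ _).trans (max_le q2 (p2.le.trans q1))
  have a4 : V.valuation (r.1 - p.1) < V.valuation r.2 :=
    (Valuation.map_sub _ _ _).trans_lt (max_lt r2 (p1.trans_le r1))
  have q0 : 0 < V.valuation q.1 := zero_lt_one.trans_le q1
  have lt : V.valuation ((q.2 - p.2) * (r.1 - p.1)) < V.valuation ((q.1 - p.1) * (r.2 - p.2)) := by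
    rw [map_mul, map_mul, a1, a2]
    exact (mul_le_mul_left a3 _).trans_lt (mul_lt_mul_of_pos_left a4 q0)
  unfold D3
  rw [Valuation.map_sub_eq_of_lt_left _ lt, map_mul, a1, a2]
  exact one_le_mul q1 r1

noncomputable def fc (p q : ℝ × ℝ) : ZMod 2 :=
  ind ((col V p = 0 ∧ col V q = 1) ∨ (col V p = 1 ∧ col V q = 0))

lemma fc_symm (p q : ℝ × ℝ) : fc V p q = fc V q p := by
  unfold fc; apply ind_congr; tauto

lemma fc_rainbow (p q r : ℝ × ℝ) (h : fc V p q + fc V q r + fc V r p ≠ 0) :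
    1 ≤ V.valuation (D3 p q r) := by
  have n1 : V.valuation (D3 p q r) = V.valuation (D3 q r p) := by
    congr 1; unfold D3; ring
  have n2 : V.valuation (D3 p q r) = V.valuation (D3 r p q) := by
    congr 1; unfold D3; ring
  have sw : ∀ p q r, V.valuation (D3 p q r) = V.valuation (D3 p r q) := by
    intro p q r; rw [← Valuation.map_neg]; congr 1; unfold D3; ring
  have c3 : ∀ x : Fin 3, x = 0 ∨ x = 1 ∨ x = 2 := by decide
  rcases c3 (col V p) with hp | hp | hp <;> rcases c3 (col V q) with hq | hq | hq <;>
  rcases c3 (col V r) with hr | hr | hr <;>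
  first
  | exact val_rainbow V hp hq hr
  | (rw [n1]; exact val_rainbow V hq hr hp)
  | (rw [n2]; exact val_rainbow V hr hp hq)
  | (rw [sw]; exact val_rainbow V hp hr hq)
  | (rw [n1, sw]; exact val_rainbow V hq hp hr)
  | (rw [n2, sw]; exact val_rainbow V hr hq hp)
  | (exfalso; apply h; simp [fc, ind, hp, hq, hr, two0])

lemma fc_square : fc V (0,0) (1,0) + fc V (1,0) (0,1) + fc V (0,1) (0,0) = 1 := by
  simp [fc, ind, col]

lemma fc_square2 : fc V (1,1) (0,1) + fc V (0,1) (1,0) + fc V (1,0) (1,1) = 0 := by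
  simp [fc, ind, col]

lemma val_odd (hV : V.valuation 2 < 1) {n : ℕ} (hn : Odd n) (d : ℝ) (hd : n * |d| = 2) :
    V.valuation d < 1 := by
  have h1 : V.valuation (n : ℝ) = 1 := by
    obtain ⟨k, rfl⟩ := hn
    have hk : V.valuation (k : ℝ) ≤ 1 := (V.valuation_le_one_iff _).2 (natCast_mem V k)
    have : V.valuation (2 * (k : ℝ)) < 1 := by
      rw [map_mul]; exact mul_lt_one_of_lt_of_le hV hk
    push_cast
    rw [add_comm, Valuation.map_one_add_of_lt _ this]
  have h2 : V.valuation |d| = V.valuation d := by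
    rcases abs_choice d with h | h <;> rw [h]
    rw [Valuation.map_neg]
  rw [← hd, map_mul, h1, h2, one_mul] at hV
  exact hV
end color

abbrev E2 := EuclideanSpace ℝ (Fin 2)

def pr (x : E2) : ℝ × ℝ := (x 0, x 1)

def Sq : Set E2 := {x | ∀ i, x i ∈ Set.Icc (0 : ℝ) 1}

lemma ext2 {x y : E2} (h0 : x 0 = y 0) (h1 : x 1 = y 1) : x = y := by
  ext i; fin_cases i
  · exact h0
  · exact h1

lemma mem_hull (p q r x : E2) : x ∈ convexHull ℝ {p, q, r} ↔
    ∃ a b c : ℝ, 0 ≤ a ∧ 0 ≤ b ∧ 0 ≤ c ∧ a + b + c = 1 ∧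
      x 0 = a * p 0 + b * q 0 + c * r 0 ∧ x 1 = a * p 1 + b * q 1 + c * r 1 := by
  constructor
  · intro hx
    rw [convexHull_insert (by simp), convexHull_pair, mem_convexJoin] at hx
    obtain ⟨p', hp', y, ⟨b, c, hb, hc, hbc, rfl⟩, ⟨a, d, ha, hd, had, rfl⟩⟩ := hx
    rw [Set.mem_singleton_iff] at hp'
    subst hp'
    refine ⟨a, d * b, d * c, ha, mul_nonneg hd hb, mul_nonneg hd hc, ?_, ?_, ?_⟩
    · rw [add_assoc, ← mul_add, hbc, mul_one, had]
    · simp; ring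
    · simp; ring
  · rintro ⟨a, b, c, ha, hb, hc, h, h0, h1⟩
    have hconv := convex_convexHull ℝ ({p, q, r} : Set E2)
    have hx : x = a • p + b • q + c • r := ext2 (by simp [h0]) (by simp [h1])
    rw [hx]
    have := hconv.sum_mem (t := Finset.univ) (w := ![a, b, c]) (z := ![p, q, r])
      (by intro i _; fin_cases i <;> simpa) (by simpa [Fin.sum_univ_three] using h)
      (by intro i _; apply subset_convexHull; fin_cases i <;> simp)
    simpa [Fin.sum_univ_three] using this

lemma hull_In {p q r x : E2} (hx : x ∈ convexHull ℝ {p, q, r})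
    (h1 : D3 (pr p) (pr q) (pr x) ≠ 0) (h2 : D3 (pr q) (pr r) (pr x) ≠ 0)
    (h3 : D3 (pr r) (pr p) (pr x) ≠ 0) : In (pr p) (pr q) (pr r) (pr x) := by
  obtain ⟨a, b, c, ha, hb, hc, h, h0, h0'⟩ := (mem_hull _ _ _ _).1 hx
  obtain rfl : a = 1 - b - c := by linarith
  have e1 : D3 (pr p) (pr q) (pr x) = c * D3 (pr p) (pr q) (pr r) := by
    simp only [D3, pr, h0, h0']; ring
  have e2 : D3 (pr q) (pr r) (pr x) = (1 - b - c) * D3 (pr p) (pr q) (pr r) := by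
    simp only [D3, pr, h0, h0']; ring
  have e3 : D3 (pr r) (pr p) (pr x) = b * D3 (pr p) (pr q) (pr r) := by
    simp only [D3, pr, h0, h0']; ring
  rw [e1] at h1; rw [e2] at h2; rw [e3] at h3
  have c' := lt_of_le_of_ne hc (left_ne_zero_of_mul h1).symm
  have a' := lt_of_le_of_ne ha (left_ne_zero_of_mul h2).symm
  have b' := lt_of_le_of_ne hb (left_ne_zero_of_mul h3).symm
  unfold In
  rw [e1, e2, e3]
  rcases lt_or_gt_of_ne (right_ne_zero_of_mul h1) with hD | hD
  · right
    exact ⟨mul_neg_of_pos_of_neg c' hD, mul_neg_of_pos_of_neg a' hD, mul_neg_of_pos_of_neg b' hD⟩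
  · left
    exact ⟨mul_pos c' hD, mul_pos a' hD, mul_pos b' hD⟩

lemma In_hull {p q r x : E2} (h : In (pr p) (pr q) (pr r) (pr x)) :
    x ∈ convexHull ℝ {p, q, r} := by
  rw [mem_hull]
  set d1 := D3 (pr p) (pr q) (pr x) with hd1
  set d2 := D3 (pr q) (pr r) (pr x) with hd2
  set d3 := D3 (pr r) (pr p) (pr x) with hd3
  have hD : d1 + d2 + d3 ≠ 0 := by
    rcases h with ⟨h1, h2, h3⟩ | ⟨h1, h2, h3⟩
    · exact (by linarith : 0 < d1 + d2 + d3).ne'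
    · exact (by linarith : d1 + d2 + d3 < 0).ne
  have pos : 0 ≤ d2 / (d1 + d2 + d3) ∧ 0 ≤ d3 / (d1 + d2 + d3) ∧ 0 ≤ d1 / (d1 + d2 + d3) := by
    rcases h with ⟨h1, h2, h3⟩ | ⟨h1, h2, h3⟩
    · refine ⟨?_, ?_, ?_⟩ <;> apply div_nonneg <;> linarith
    · refine ⟨?_, ?_, ?_⟩ <;> apply div_nonneg_of_nonpos <;> linarith
  refine ⟨_, _, _, pos.1, pos.2.1, pos.2.2, ?_, ?_, ?_⟩
  · field_simp; ring
  · field_simp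
    simp only [hd1, hd2, hd3, D3, pr]; ring
  · field_simp
    simp only [hd1, hd2, hd3, D3, pr]; ring

lemma In_interior {p q r x : E2} (h : In (pr p) (pr q) (pr r) (pr x)) :
    x ∈ interior (convexHull ℝ {p, q, r}) := by
  have hc : ∀ p q : E2, Continuous fun x : E2 => D3 (pr p) (pr q) (pr x) := by
    intro p q; unfold D3 pr; fun_prop
  have ho : IsOpen {x : E2 | In (pr p) (pr q) (pr r) (pr x)} := by
    unfold In
    exact ((isOpen_lt continuous_const (hc p q)).inter
      ((isOpen_lt continuous_const (hc q r)).inter (isOpen_lt continuous_const (hc r p)))).union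
      ((isOpen_lt (hc p q) continuous_const).inter
      ((isOpen_lt (hc q r) continuous_const).inter (isOpen_lt (hc r p) continuous_const)))
  exact interior_maximal (fun x hx => In_hull hx) ho h

lemma dis_In {n : ℕ} (p q r : Fin n → E2)
    (hd : ∀ j j', j ≠ j' → Disjoint (interior (convexHull ℝ {p j, q j, r j}))
      (interior (convexHull ℝ {p j', q j', r j'})))
    (hu : (⋃ j, convexHull ℝ {p j, q j, r j}) = Sq) (x : E2)
    (h1 : ∀ j, D3 (pr (p j)) (pr (q j)) (pr x) ≠ 0)
    (h2 : ∀ j, D3 (pr (q j)) (pr (r j)) (pr x) ≠ 0)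
    (h3 : ∀ j, D3 (pr (r j)) (pr (p j)) (pr x) ≠ 0) :
    ∑ j, ind (In (pr (p j)) (pr (q j)) (pr (r j)) (pr x)) = ind (x ∈ Sq) := by
  by_cases hx : x ∈ Sq
  · rw [ind, if_pos hx]
    rw [← hu] at hx
    obtain ⟨j, hj⟩ := Set.mem_iUnion.1 hx
    have hj := hull_In hj (h1 j) (h2 j) (h3 j)
    rw [Finset.sum_eq_single j]
    · rw [ind, if_pos hj]
    · intro k _ hk
      rw [ind, if_neg]
      intro hk'
      exact Set.disjoint_left.1 (hd k j hk) (In_interior hk') (In_interior hj)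
    · simp
  · rw [ind, if_neg hx]
    refine Finset.sum_eq_zero fun j _ => ?_
    rw [ind, if_neg]
    intro hj
    exact hx (hu ▸ Set.mem_iUnion.2 ⟨j, In_hull hj⟩)

def T0 : Set E2 := convexHull ℝ {0, !₂[1, 0], !₂[0, 1]}

noncomputable def lin (p q r : E2) : E2 →ₗ[ℝ] E2 where
  toFun x := x 0 • (q - p) + x 1 • (r - p)
  map_add' x y := by apply ext2 <;> simp <;> ring
  map_smul' c x := by apply ext2 <;> simp <;> ring

lemma det_lin (p q r : E2) : LinearMap.det (lin p q r) = D3 (pr p) (pr q) (pr r) := by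
  rw [← LinearMap.det_toMatrix (EuclideanSpace.basisFun (Fin 2) ℝ).toBasis, Matrix.det_fin_two]
  simp [LinearMap.toMatrix_apply, lin, D3, pr]
  ring

lemma vol_hull (p q r : E2) : volume (convexHull ℝ {p, q, r}) =
    ENNReal.ofReal |D3 (pr p) (pr q) (pr r)| * volume T0 := by
  have : (convexHull ℝ {p, q, r} : Set E2) = (fun x => p + x) '' (lin p q r '' T0) := by
    unfold T0
    rw [LinearMap.image_convexHull]
    have := (AffineEquiv.constVAdd ℝ E2 p).toAffineMap.image_convexHull
      (lin p q r '' {0, !₂[1, 0], !₂[0, 1]})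
    have e : ⇑(AffineEquiv.constVAdd ℝ E2 p).toAffineMap = fun x => p + x := by
      ext x; simp
    rw [e] at this
    rw [this]
    congr 1
    simp [Set.image_insert_eq, lin]
  rw [this, Set.image_add_left, measure_preimage_add, Measure.addHaar_image_linearMap, det_lin]

lemma vol_T0 : volume T0 ≠ 0 ∧ volume T0 ≠ ⊤ := by
  constructor
  · have : (!₂[1/4, 1/4] : E2) ∈ interior T0 := by
      apply In_interior
      simp [In, D3, pr]
      norm_num
    exact (Measure.measure_pos_of_nonempty_interior _ ⟨_, this⟩).ne'
  · have : IsCompact T0 := (Set.toFinite _).isCompact_convexHull (𝕜 := ℝ)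
    exact this.measure_lt_top.ne

lemma dis_vol {n : ℕ} (p q r : Fin n → E2)
    (hd : ∀ j j', j ≠ j' → Disjoint (interior (convexHull ℝ {p j, q j, r j}))
      (interior (convexHull ℝ {p j', q j', r j'})))
    (hu : (⋃ j, convexHull ℝ {p j, q j, r j}) = Sq) :
    volume Sq = ENNReal.ofReal (∑ j, |D3 (pr (p j)) (pr (q j)) (pr (r j))|) * volume T0 := by
  have hc : ∀ j, Convex ℝ (convexHull ℝ {p j, q j, r j} : Set E2) := fun j => convex_convexHull _ _
  rw [← hu, measure_iUnion₀]
  · rw [tsum_fintype, ENNReal.ofReal_sum_of_nonneg (fun _ _ => abs_nonneg _), Finset.sum_mul]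
    exact Finset.sum_congr rfl fun j _ => vol_hull _ _ _
  · intro j k hjk
    refine measure_mono_null (t := frontier (convexHull ℝ {p j, q j, r j}) ∪
      frontier (convexHull ℝ {p k, q k, r k})) ?_
      (measure_union_null ((hc j).addHaar_frontier _) ((hc k).addHaar_frontier _))
    rintro x ⟨hj, hk⟩
    by_contra hx
    simp only [Set.mem_union, not_or] at hx
    have i1 : x ∈ interior (convexHull ℝ {p j, q j, r j}) := by
      by_contra h; exact hx.1 ⟨subset_closure hj, h⟩
    have i2 : x ∈ interior (convexHull ℝ {p k, q k, r k}) := by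
      by_contra h; exact hx.2 ⟨subset_closure hk, h⟩
    exact Set.disjoint_left.1 (hd j k hjk) i1 i2
  · exact fun j => (hc j).nullMeasurableSet _

/-- the two-triangle dissection -/
def sp : Fin 2 → E2 := ![!₂[0, 0], !₂[1, 1]]
def sq : Fin 2 → E2 := ![!₂[1, 0], !₂[0, 1]]
def sr : Fin 2 → E2 := ![!₂[0, 1], !₂[1, 0]]

lemma s_union : (⋃ j, convexHull ℝ {sp j, sq j, sr j}) = Sq := by
  ext x
  simp only [Set.mem_iUnion, mem_hull, Fin.exists_fin_two, Sq, Set.mem_ofPred_eq, Fin.forall_fin_two,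
    Set.mem_Icc]
  constructor
  · rintro (⟨a, b, c, ha, hb, hc, h, h0, h1⟩ | ⟨a, b, c, ha, hb, hc, h, h0, h1⟩) <;>
    · simp [sp, sq, sr] at h0 h1
      rw [h0, h1]
      refine ⟨⟨?_, ?_⟩, ?_, ?_⟩ <;> linarith
  · rintro ⟨⟨h1, h2⟩, h3, h4⟩
    rcases le_total (x 0 + x 1) 1 with h | h
    · left
      exact ⟨1 - x 0 - x 1, x 0, x 1, by linarith, h1, h3, by ring, by simp [sp, sq, sr],
        by simp [sp, sq, sr]⟩
    · right
      exact ⟨x 0 + x 1 - 1, 1 - x 0, 1 - x 1, by linarith, by linarith, by linarith, by ring,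
        by simp [sp, sq, sr], by simp [sp, sq, sr]⟩

lemma s_disj01 : Disjoint (interior (convexHull ℝ {sp 0, sq 0, sr 0}))
      (interior (convexHull ℝ {sp 1, sq 1, sr 1})) := by
  rw [Set.disjoint_left]
  intro x h0 h1
  have hU := (isOpen_interior.inter isOpen_interior).mem_nhds (Set.mem_inter h0 h1)
  have hcont : Continuous fun t : ℝ => x + t • (!₂[1, 1] : E2) := by fun_prop
  have ht : Tendsto (fun t : ℝ => x + t • (!₂[1, 1] : E2)) (𝓝[>] 0) (𝓝 x) := by
    have := hcont.tendsto 0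
    simp only [zero_smul, add_zero] at this
    exact this.mono_left nhdsWithin_le_nhds
  have key : ∀ y, y ∈ interior (convexHull ℝ {sp 0, sq 0, sr 0}) ∩
      interior (convexHull ℝ {sp 1, sq 1, sr 1}) → y 0 + y 1 = 1 := by
    rintro y ⟨a0, a1⟩
    obtain ⟨a, b, c, ha, hb, hc, h, h0, h1⟩ := (mem_hull _ _ _ _).1 (interior_subset a0)
    obtain ⟨a', b', c', ha', hb', hc', h', h0', h1'⟩ := (mem_hull _ _ _ _).1 (interior_subset a1)
    simp [sp, sq, sr] at h0 h1 h0' h1'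
    linarith
  obtain ⟨t, ht1, ht2⟩ := ((ht.eventually_mem hU).and self_mem_nhdsWithin).exists
  have k1 := key _ ht1
  have k2 := key _ ⟨h0, h1⟩
  have ht2 : 0 < t := ht2
  simp at k1
  linarith

lemma s_disj : ∀ j j', j ≠ j' → Disjoint (interior (convexHull ℝ {sp j, sq j, sr j}))
      (interior (convexHull ℝ {sp j', sq j', sr j'})) := by
  intro j j' h
  fin_cases j <;> fin_cases j'
  · exact absurd rfl h
  · exact s_disj01
  · exact s_disj01.symm
  · exact absurd rfl h

lemma vol_Sq : volume Sq = ENNReal.ofReal 2 * volume T0 := by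
  rw [dis_vol sp sq sr s_disj s_union]
  congr 2
  simp [Fin.sum_univ_two, D3, pr, sp, sq, sr]
  norm_num

def shear (c : ℝ) (u : ℝ × ℝ) : ℝ × ℝ := (u.1 + c * u.2, u.2)

lemma shear_neg (c : ℝ) (u : ℝ × ℝ) : shear (-c) (shear c u) = u := by
  ext <;> simp [shear]

lemma shear_neg' (c : ℝ) (u : ℝ × ℝ) : shear c (shear (-c) u) = u := by
  ext <;> simp [shear]

lemma D3_shear (c : ℝ) (p q r : ℝ × ℝ) : D3 (shear c p) (shear c q) (shear c r) = D3 p q r := by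
  simp only [D3, shear]; ring

lemma In_shear (c : ℝ) (p q r X : ℝ × ℝ) :
    In (shear c p) (shear c q) (shear c r) (shear c X) ↔ In p q r X := by
  simp only [In, D3_shear]

lemma parity' {ι : Type*} [Fintype ι] (P : ι → Fin 3 → ℝ × ℝ)
    (hx : ∀ i k, P i k ≠ P i (k + 1))
    (f : ℝ × ℝ → ℝ × ℝ → ZMod 2)
    (hf : ∀ p q r, D3 p q r = 0 → f p q + f q r + f r p = 0)
    (hs : ∀ p q, f p q = f q p)
    (h : ∀ X : ℝ × ℝ, (∀ i k, D3 (P i k) (P i (k + 1)) X ≠ 0) →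
      ∑ i, ind (In (P i 0) (P i 1) (P i 2) X) = 0) :
    ∑ i, (f (P i 0) (P i 1) + f (P i 1) (P i 2) + f (P i 2) (P i 0)) = 0 := by
  have fin : (⋃ i, ⋃ k, {c : ℝ | (shear c (P i k)).1 = (shear c (P i (k + 1))).1}).Finite := by
    refine Set.finite_iUnion fun i => Set.finite_iUnion fun k => Set.Subsingleton.finite ?_
    intro c hc d hd
    simp only [shear, Set.mem_ofPred_eq] at hc hd
    have : (c - d) * ((P i k).2 - (P i (k + 1)).2) = 0 := by linarith
    rcases mul_eq_zero.1 this with h0 | h0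
    · linarith
    · exfalso
      apply hx i k
      have h2 : (P i k).2 = (P i (k + 1)).2 := by linarith
      rw [h2] at hc
      exact Prod.ext (by linarith) h2
  obtain ⟨c, hc⟩ := fin.infinite_compl.nonempty
  simp only [Set.mem_compl_iff, Set.mem_iUnion, not_exists, Set.mem_ofPred_eq] at hc
  have := parity (fun i k => shear c (P i k)) hc (fun u w => f (shear (-c) u) (shear (-c) w))
    (fun p q r hD => hf _ _ _ (by rw [D3_shear, hD])) (fun p q => hs _ _) (by
      intro X hX
      rw [← shear_neg' c X] at hX ⊢
      simp only [D3_shear, In_shear] at hX ⊢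
      exact h _ hX)
  simpa only [shear_neg] using this

lemma ne_of_pr {p q : E2} (h : p ≠ q) : pr p ≠ pr q := fun hh =>
  h (ext2 (congrArg Prod.fst hh) (congrArg Prod.snd hh))

lemma main {n : ℕ} (hn : Odd n) (p q r : Fin n → E2)
    (hpq : ∀ j, p j ≠ q j) (hqr : ∀ j, q j ≠ r j) (hrp : ∀ j, r j ≠ p j)
    (hd : ∀ j j', j ≠ j' → Disjoint (interior (convexHull ℝ {p j, q j, r j}))
      (interior (convexHull ℝ {p j', q j', r j'})))
    (hu : (⋃ j, convexHull ℝ {p j, q j, r j}) = Sq)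
    (hv : ∀ j j', volume (convexHull ℝ {p j, q j, r j}) =
      volume (convexHull ℝ {p j', q j', r j'})) : False := by
  obtain ⟨V, hV⟩ := exists_val
  obtain ⟨v0, vT⟩ := vol_T0
  -- areas
  have hdet : ∀ j, n * |D3 (pr (p j)) (pr (q j)) (pr (r j))| = 2 := by
    intro j
    have h1 := dis_vol p q r hd hu
    rw [vol_Sq, ENNReal.mul_left_inj v0 vT] at h1
    have h2 : ∀ k, |D3 (pr (p k)) (pr (q k)) (pr (r k))| =
        |D3 (pr (p j)) (pr (q j)) (pr (r j))| := by
      intro k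
      have := hv k j
      rw [vol_hull, vol_hull, ENNReal.mul_left_inj v0 vT,
        ENNReal.ofReal_eq_ofReal_iff (abs_nonneg _) (abs_nonneg _)] at this
      exact this
    rw [ENNReal.ofReal_eq_ofReal_iff (by norm_num) (Finset.sum_nonneg fun _ _ => abs_nonneg _)] at h1
    rw [Finset.sum_congr rfl fun k _ => h2 k] at h1
    simpa using h1.symm
  -- parity
  have par := parity' (ι := Fin n ⊕ Fin 2)
    (Sum.elim (fun j => ![pr (p j), pr (q j), pr (r j)]) (fun j => ![pr (sp j), pr (sq j), pr (sr j)]))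
    (by
      rintro (j | j) k
      · fin_cases k
        · exact ne_of_pr (hpq j)
        · exact ne_of_pr (hqr j)
        · exact ne_of_pr (hrp j)
      · fin_cases j <;> fin_cases k <;> simp [sp, sq, sr, pr])
    (fc V)
    (by
      intro a b c hD
      by_contra hc
      have := fc_rainbow V a b c hc
      rw [hD, map_zero] at this
      exact not_le_of_gt zero_lt_one this)
    (fc_symm V)
    (by
      intro X hX
      obtain ⟨x, rfl⟩ : ∃ x : E2, pr x = X := ⟨!₂[X.1, X.2], by simp [pr]⟩
      rw [Fintype.sum_sum_type]
      have a1 := dis_In p q r hd hu x (fun j => hX (Sum.inl j) 0) (fun j => hX (Sum.inl j) 1)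
        (fun j => hX (Sum.inl j) 2)
      have a2 := dis_In sp sq sr s_disj s_union x (fun j => hX (Sum.inr j) 0)
        (fun j => hX (Sum.inr j) 1) (fun j => hX (Sum.inr j) 2)
      have a3 : ∀ a : ZMod 2, a + a = 0 := by decide
      exact (congrArg₂ (· + ·) a1 a2).trans (a3 _))
  rw [Fintype.sum_sum_type, Fin.sum_univ_two] at par
  have b1 := fc_square V
  have b2 := fc_square2 V
  have b0 : ∑ j, (fc V (pr (p j)) (pr (q j)) + fc V (pr (q j)) (pr (r j)) +
      fc V (pr (r j)) (pr (p j))) = 0 := by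
    refine Finset.sum_eq_zero fun j _ => ?_
    by_contra hc
    exact not_lt_of_ge (fc_rainbow V _ _ _ hc) (val_odd V hV hn _ (hdet j))
  have c1 : pr (sp 0) = (0, 0) := by simp [pr, sp]
  have c2 : pr (sq 0) = (1, 0) := by simp [pr, sq]
  have c3 : pr (sr 0) = (0, 1) := by simp [pr, sr]
  have c4 : pr (sp 1) = (1, 1) := by simp [pr, sp]
  have c5 : pr (sq 1) = (0, 1) := by simp [pr, sq]
  have c6 : pr (sr 1) = (1, 0) := by simp [pr, sr]
  rw [← c1, ← c2, ← c3] at b1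
  rw [← c4, ← c5, ← c6] at b2
  have e := (congrArg₂ (· + ·) b0 (congrArg₂ (· + ·) b1 b2)).symm.trans par
  exact absurd e (by decide)

end Mk

/-- Monsky's theorem: the unit square cannot be partitioned into an odd number
of triangles of equal area. -/
theorem monsky (n : ℕ) (hn : Odd n) :
    ¬ ∃ T : Fin n → Set (EuclideanSpace ℝ (Fin 2)),
      (∀ j, ∃ p q r : EuclideanSpace ℝ (Fin 2),
        AffineIndependent ℝ ![p, q, r] ∧ T j = convexHull ℝ {p, q, r}) ∧
      (∀ j j', j ≠ j' → Disjoint (interior (T j)) (interior (T j'))) ∧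
      (⋃ j, T j) = {x : EuclideanSpace ℝ (Fin 2) | ∀ i, x i ∈ Set.Icc (0 : ℝ) 1} ∧
      (∀ j j', volume (T j) = volume (T j')) := by
  rintro ⟨T, hT, hd, hu, hv⟩
  choose p q r hA hT using hT
  obtain rfl : T = fun j => convexHull ℝ {p j, q j, r j} := funext hT
  refine Mk.main hn p q r (fun j h => ?_) (fun j h => ?_) (fun j h => ?_) hd hu hv
  · exact absurd ((hA j).injective (a₁ := 0) (a₂ := 1) (by simpa using h)) (by decide)
  · exact absurd ((hA j).injective (a₁ := 1) (a₂ := 2) (by simpa using h)) (by decide)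
  · exact absurd ((hA j).injective (a₁ := 2) (a₂ := 0) (by simpa using h)) (by decide)
end
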